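/- arXiv:1412.0844 — 3 statements merged into one kernel-verified Lean document; each statement's English description precedes it below -/
import Mathlib

section
/- Let h ∈ N(Π⁺) and let L be a subset of the positive integers ℕ* satisfying the Müntz condition Σ_{n∈L} 1/n = ∞. If h(n) = 0 for every n ∈ L, then h is identically zero on Π⁺. -/
/-- The right half plane `Π⁺ = {z ∈ ℂ : Re z > 0}`. -/
def PiPlus : Set ℂ := {z : ℂ | 0 < z.re}

/-- `ln⁺(x) = ln x` if `ln x ≥ 0` and `0` otherwise. -/
noncomputable def lnPlus (x : ℝ) : ℝ := max (Real.log x) 0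

/-- The Nevanlinna class `N(Π⁺)`: holomorphic functions `f` on `Π⁺` such that
`sup_{0<r<1} ∫_{−π}^{π} ln⁺ |f((1 − re^{iφ})/(1 + re^{iφ}))| dφ < ∞`. -/
def MemNevanlinna (f : ℂ → ℂ) : Prop :=
  DifferentiableOn ℂ f PiPlus ∧
  ∃ B : ℝ, ∀ r ∈ Set.Ioo (0 : ℝ) 1,
    (∫ φ in (-Real.pi)..Real.pi,
        lnPlus (norm (f ((1 - (r : ℂ) * Complex.exp (Complex.I * (φ : ℂ))) /
          (1 + (r : ℂ) * Complex.exp (Complex.I * (φ : ℂ))))))) ≤ B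

/-!
Through the Cayley transform `z ↦ (1 - z) / (1 + z)`, a function of `N(Π⁺)` becomes a function on
the unit disc whose logarithmic means over the circles `|w| = r` are bounded above. By Jensen's
formula those means bound `∑ log (r / |u|)` over the zeros `u`, so letting `r → 1` gives the
Blaschke condition `∑ (1 - |u|) < ∞`, unless the function vanishes identically. Back in the half
plane, the terms `1 - |u|` are comparable to `Re z / (1 + |z|²)`, hence to `1 / n` when `z = n`.
-/

open Filter Metric MeromorphicOn Real Topology

lemma sum_le_finsum_of_nonneg {α : Type*} {f : α → ℝ} (hf : f.support.Finite)
    (hnonneg : ∀ a, 0 ≤ f a) (s : Finset α) : ∑ a ∈ s, f a ≤ ∑ᶠ a, f a := by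
  rw [← tsum_eq_finsum (L := .unconditional α) hf]
  exact (summable_of_hasFiniteSupport hf).sum_le_tsum s fun a _ ↦ hnonneg a

section Log

variable {x r : ℝ}

lemma log_mul_inv_nonneg (hx : 0 ≤ x) (hxr : x ≤ r) : 0 ≤ log (r * x⁻¹) := by
  rcases hx.eq_or_lt with rfl | hpos
  · simp
  · exact log_nonneg (by rwa [← div_eq_mul_inv, one_le_div hpos])

lemma log_mul_inv_nonpos (hr : 0 ≤ r) (hrx : r ≤ x) : log (r * x⁻¹) ≤ 0 :=
  log_nonpos (mul_nonneg hr (inv_nonneg.mpr (hr.trans hrx)))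
    (mul_inv_le_one_of_le₀ hrx (hr.trans hrx))

lemma sub_le_mul_log_mul_inv (hr : 0 < r) (hx : 0 < x) : r - x ≤ r * log (r * x⁻¹) := by
  calc r - x
    _ = r * (1 - (r * x⁻¹)⁻¹) := by field_simp
    _ ≤ r * log (r * x⁻¹) := by
      gcongr
      exact one_sub_inv_le_log_of_pos (by positivity)

lemma continuousAt_log_mul_const (a : ℝ) (hr : r ≠ 0) :
    ContinuousAt (fun s ↦ log (s * a)) r := by
  rcases eq_or_ne a 0 with rfl | ha
  · simpa using continuousAt_const
  · exact ContinuousAt.log (by fun_prop) (mul_ne_zero hr ha)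

end Log

lemma one_div_le_two_mul_div_one_add_sq {x : ℝ} (hx : 1 ≤ x) :
    1 / x ≤ 2 * (x / (1 + x ^ 2)) := by
  rw [← mul_div_assoc, div_le_div_iff₀ (by positivity) (by positivity)]
  nlinarith

lemma one_le_divisor_of_eq_zero {𝕜 E : Type*} [NontriviallyNormedField 𝕜]
    [NormedAddCommGroup E] [NormedSpace 𝕜 E] {f : 𝕜 → E} {U : Set 𝕜} {u : 𝕜}
    (hf : AnalyticOnNhd 𝕜 f U) (hU : IsPreconnected U) (hne : ∃ v ∈ U, f v ≠ 0)
    (hu : u ∈ U) (hfu : f u = 0) : 1 ≤ divisor f U u := by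
  obtain ⟨v, hv, hfv⟩ := hne
  have hord_v : analyticOrderAt f v ≠ ⊤ := by
    simp [(hf v hv).analyticOrderAt_eq_zero.mpr hfv]
  have hord_u : analyticOrderAt f u ≠ ⊤ :=
    hf.analyticOrderAt_ne_top_of_isPreconnected hU hv hu hord_v
  have hord_pos : analyticOrderAt f u ≠ 0 := (hf u hu).analyticOrderAt_ne_zero.mpr hfu
  obtain ⟨k, hk⟩ := ENat.ne_top_iff_exists.mp hord_u
  rw [AnalyticOnNhd.divisor_apply hf hu, ← hk]
  rw [← hk, Nat.cast_ne_zero] at hord_pos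
  simpa using Nat.one_le_iff_ne_zero.mpr hord_pos

lemma circleAverage_log_norm_le_circleAverage_posLog_norm {E : Type*} [NormedAddCommGroup E]
    [NormedSpace ℂ E] {f : ℂ → E} {c : ℂ} {r : ℝ} (hf : MeromorphicOn f (sphere c |r|)) :
    circleAverage (log ‖f ·‖) c r ≤ circleAverage (log⁺ ‖f ·‖) c r :=
  circleAverage_mono hf.circleIntegrable_log_norm hf.circleIntegrable_posLog_norm
    fun _ _ ↦ le_max_right _ _

section Disc

variable {f : ℂ → ℂ} {U : Set ℂ} {c : ℂ} {r R B : ℝ}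

lemma divisor_mul_log_nonneg (hf : AnalyticOnNhd ℂ f U) (hU : U ⊆ closedBall c r) (u : ℂ) :
    0 ≤ divisor f U u * log (r * ‖c - u‖⁻¹) := by
  by_cases hu : u ∈ U
  · exact mul_nonneg (mod_cast AnalyticOnNhd.divisor_nonneg hf u)
      (log_mul_inv_nonneg (norm_nonneg _) (mem_closedBall_iff_norm'.mp (hU hu)))
  · simp [hu]

-- The zeros outside the closed ball contribute nonpositive terms on the left and none on the right.
lemma divisor_mul_log_le_divisor_closedBall_mul_log (hf : AnalyticOnNhd ℂ f U) (hr : 0 ≤ r)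
    (hrU : closedBall c r ⊆ U) (u : ℂ) :
    divisor f U u * log (r * ‖c - u‖⁻¹) ≤
      divisor f (closedBall c r) u * log (r * ‖c - u‖⁻¹) := by
  by_cases hu : u ∈ closedBall c r
  · simp [hf.meromorphicOn, hf.meromorphicOn.mono_set hrU, hu, hrU hu]
  · have hru : r ≤ ‖c - u‖ := (not_le.mp (mem_closedBall_iff_norm'.not.mp hu)).le
    simpa [hu] using mul_nonpos_of_nonneg_of_nonpos
      (mod_cast AnalyticOnNhd.divisor_nonneg hf u) (log_mul_inv_nonpos hr hru)

lemma sum_divisor_mul_log_le_circleAverage (hf : AnalyticOnNhd ℂ f U) (hr : 0 < r)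
    (hrU : closedBall c r ⊆ U) (F : Finset ℂ) :
    ∑ u ∈ F, divisor f U u * log (r * ‖c - u‖⁻¹) ≤
      circleAverage (log ‖f ·‖) c r - divisor f U c * log r -
        log ‖meromorphicTrailingCoeffAt f c‖ := by
  have hfr : AnalyticOnNhd ℂ f (closedBall c r) := hf.mono hrU
  have hc : c ∈ closedBall c r := mem_closedBall_self hr.le
  have jensen := circleAverage_log_norm hr.ne' (abs_of_pos hr ▸ hfr.meromorphicOn)
  rw [abs_of_pos hr, divisor_apply hfr.meromorphicOn hc,
    ← divisor_apply hf.meromorphicOn (hrU hc)] at jensen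
  have hsupport : (fun u ↦ divisor f (closedBall c r) u * log (r * ‖c - u‖⁻¹)).support.Finite :=
    ((divisor f (closedBall c r)).finiteSupport (isCompact_closedBall c r)).subset
      fun u hu ↦ by simp_all
  calc ∑ u ∈ F, divisor f U u * log (r * ‖c - u‖⁻¹)
    _ ≤ ∑ u ∈ F, divisor f (closedBall c r) u * log (r * ‖c - u‖⁻¹) :=
      Finset.sum_le_sum fun u _ ↦ divisor_mul_log_le_divisor_closedBall_mul_log hf hr.le hrU u
    _ ≤ ∑ᶠ u, divisor f (closedBall c r) u * log (r * ‖c - u‖⁻¹) :=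
      sum_le_finsum_of_nonneg hsupport (divisor_mul_log_nonneg hfr subset_rfl) F
    _ = _ := by linarith

lemma summable_divisor_mul_log (hR : 0 < R) (hf : AnalyticOnNhd ℂ f (ball c R))
    (hB : ∀ r ∈ Set.Ioo 0 R, circleAverage (log ‖f ·‖) c r ≤ B) :
    Summable fun u ↦ divisor f (ball c R) u * log (R * ‖c - u‖⁻¹) := by
  set D := divisor f (ball c R)
  set C := log ‖meromorphicTrailingCoeffAt f c‖
  refine summable_of_sum_le (c := B - D c * log R - C)
    (divisor_mul_log_nonneg hf ball_subset_closedBall) fun F ↦ ?_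
  have hbound : ∀ r ∈ Set.Ioo 0 R,
      ∑ u ∈ F, D u * log (r * ‖c - u‖⁻¹) ≤ B - D c * log r - C := fun r hr ↦
    (sum_divisor_mul_log_le_circleAverage hf hr.1 (closedBall_subset_ball hr.2) F).trans
      (by gcongr; exact hB r hr)
  have hleft : ContinuousAt (fun r ↦ ∑ u ∈ F, D u * log (r * ‖c - u‖⁻¹)) R :=
    tendsto_finsetSum F fun u _ ↦ (continuousAt_log_mul_const _ hR.ne').const_mul _
  have hright : ContinuousAt (fun r ↦ B - D c * log r - C) R := by
    fun_prop (disch := exact hR.ne')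
  exact le_of_tendsto_of_tendsto (b := 𝓝[<] R) hleft.continuousWithinAt
    hright.continuousWithinAt (eventually_of_mem (Ioo_mem_nhdsLT hR) hbound)

theorem summable_divisor_mul_sub_norm (hR : 0 < R) (hf : AnalyticOnNhd ℂ f (ball c R))
    (hB : ∀ r ∈ Set.Ioo 0 R, circleAverage (log ‖f ·‖) c r ≤ B) :
    Summable fun u ↦ divisor f (ball c R) u * (R - ‖c - u‖) := by
  refine ((summable_divisor_mul_log hR hf hB).mul_left R).of_norm_bounded_eventually ?_
  -- At `u = c` the logarithm takes the junk value `log 0 = 0`, so this point is left out.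
  filter_upwards [eventually_cofinite_ne c] with u huc
  have hD : (0 : ℝ) ≤ divisor f (ball c R) u := mod_cast AnalyticOnNhd.divisor_nonneg hf u
  by_cases hu : u ∈ ball c R
  · have hnonneg : 0 ≤ R - ‖c - u‖ := sub_nonneg.mpr (mem_ball_iff_norm'.mp hu).le
    rw [norm_of_nonneg (mul_nonneg hD hnonneg), mul_left_comm]
    exact mul_le_mul_of_nonneg_left
      (sub_le_mul_log_mul_inv hR (norm_pos_iff.mpr (sub_ne_zero.mpr huc.symm))) hD
  · simp [hu]

theorem summable_sub_norm_of_zeros (hf : AnalyticOnNhd ℂ f (ball c R))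
    (hB : ∀ r ∈ Set.Ioo 0 R, circleAverage (log ‖f ·‖) c r ≤ B)
    (hne : ∃ v ∈ ball c R, f v ≠ 0) {ι : Type*} {u : ι → ℂ} (hu : u.Injective)
    (hmem : ∀ i, u i ∈ ball c R) (hzero : ∀ i, f (u i) = 0) :
    Summable fun i ↦ R - ‖c - u i‖ := by
  have hR : 0 < R := hne.elim fun _ hv ↦ pos_of_mem_ball hv.1
  have hnonneg i : 0 ≤ R - ‖c - u i‖ := sub_nonneg.mpr (mem_ball_iff_norm'.mp (hmem i)).le
  refine .of_nonneg_of_le hnonneg (fun i ↦ le_mul_of_one_le_left (hnonneg i) ?_)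
    ((summable_divisor_mul_sub_norm hR hf hB).comp_injective hu)
  exact_mod_cast one_le_divisor_of_eq_zero hf (convex_ball c R).isPreconnected hne
    (hmem i) (hzero i)

end Disc

section Cayley

variable {z : ℂ}

/-- The Cayley transform `z ↦ (1 - z) / (1 + z)`, an involution exchanging the right half plane
and the unit disc. -/
noncomputable def cayley (z : ℂ) : ℂ := (1 - z) / (1 + z)

lemma one_add_ne_zero_of_re_pos (hz : 0 < z.re) : 1 + z ≠ 0 := fun h ↦ by
  have hre : 1 + z.re = 0 := by simpa using congrArg Complex.re h
  linarith

lemma one_add_ne_zero_of_norm_lt_one (hz : ‖z‖ < 1) : 1 + z ≠ 0 := fun h ↦ by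
  simp [← neg_eq_of_add_eq_zero_right h] at hz

lemma one_add_cayley (hz : 1 + z ≠ 0) : 1 + cayley z = 2 / (1 + z) := by
  rw [cayley]
  field_simp
  ring

lemma cayley_cayley (hz : 1 + z ≠ 0) : cayley (cayley z) = z := by
  rw [cayley, one_add_cayley hz, cayley]
  field_simp
  ring

lemma cayley_injOn : Set.InjOn cayley {z | 1 + z ≠ 0} :=
  Set.LeftInvOn.injOn fun _ ↦ cayley_cayley

lemma one_sub_norm_cayley_sq (hz : 1 + z ≠ 0) :
    1 - ‖cayley z‖ ^ 2 = 4 * z.re / ‖1 + z‖ ^ 2 := by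
  have hpos : 0 < ‖1 + z‖ ^ 2 := pow_pos (norm_pos_iff.mpr hz) 2
  rw [cayley, norm_div, div_pow, one_sub_div hpos.ne']
  congr 1
  simp only [← Complex.normSq_eq_norm_sq, Complex.normSq_apply, Complex.add_re, Complex.add_im,
    Complex.sub_re, Complex.sub_im, Complex.one_re, Complex.one_im]
  ring

lemma norm_cayley_lt_one_iff (hz : 1 + z ≠ 0) : ‖cayley z‖ < 1 ↔ 0 < z.re := by
  have hpos : 0 < ‖1 + z‖ ^ 2 := pow_pos (norm_pos_iff.mpr hz) 2
  rw [← sq_lt_one_iff₀ (norm_nonneg _), ← sub_pos, one_sub_norm_cayley_sq hz,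
    div_pos_iff_of_pos_right hpos, mul_pos_iff_of_pos_left four_pos]

lemma mapsTo_cayley_piPlus : Set.MapsTo cayley PiPlus (ball 0 1) := fun _ hz ↦
  mem_ball_zero_iff.mpr ((norm_cayley_lt_one_iff (one_add_ne_zero_of_re_pos hz)).mpr hz)

lemma mapsTo_cayley_ball : Set.MapsTo cayley (ball 0 1) PiPlus := fun w hw ↦ by
  rw [mem_ball_zero_iff] at hw
  have hw' : 1 + w ≠ 0 := one_add_ne_zero_of_norm_lt_one hw
  have hcayley : 1 + cayley w ≠ 0 := one_add_cayley hw' ▸ div_ne_zero two_ne_zero hw'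
  exact (norm_cayley_lt_one_iff hcayley).mp (by rwa [cayley_cayley hw'])

lemma differentiableOn_cayley : DifferentiableOn ℂ cayley {z | 1 + z ≠ 0} := fun z hz ↦ by
  unfold cayley
  fun_prop (disch := exact hz)

lemma re_div_one_add_norm_sq_le (hz : 0 < z.re) :
    z.re / (1 + ‖z‖ ^ 2) ≤ 1 - ‖cayley z‖ := by
  have hz' : 1 + z ≠ 0 := one_add_ne_zero_of_re_pos hz
  have hpos : 0 < ‖1 + z‖ := norm_pos_iff.mpr hz'
  have hnorm : ‖1 + z‖ ^ 2 ≤ 2 * (1 + ‖z‖ ^ 2) := by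
    have htriangle : ‖1 + z‖ ≤ 1 + ‖z‖ := by simpa using norm_add_le 1 z
    nlinarith [sq_nonneg (1 - ‖z‖), norm_nonneg z]
  calc z.re / (1 + ‖z‖ ^ 2)
    _ = 2 * z.re / (2 * (1 + ‖z‖ ^ 2)) := (mul_div_mul_left _ _ two_ne_zero).symm
    _ ≤ 2 * z.re / ‖1 + z‖ ^ 2 := by gcongr
    _ = (1 - ‖cayley z‖ ^ 2) / 2 := by rw [one_sub_norm_cayley_sq hz']; ring
    _ ≤ 1 - ‖cayley z‖ := by nlinarith [sq_nonneg (1 - ‖cayley z‖)]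

lemma circleAverage_posLog_norm_comp_cayley (h : ℂ → ℂ) (r : ℝ) :
    circleAverage (fun w ↦ log⁺ ‖h (cayley w)‖) 0 r =
      (2 * π)⁻¹ * ∫ φ in (-π)..π,
        lnPlus ‖h ((1 - r * Complex.exp (Complex.I * φ)) /
          (1 + r * Complex.exp (Complex.I * φ)))‖ := by
  rw [circleAverage_eq_integral_add (-π), intervalIntegral.integral_comp_add_right
    (fun θ ↦ log⁺ ‖h (cayley (circleMap 0 r θ))‖), smul_eq_mul, zero_add,
    show 2 * π + -π = π by ring]
  simp only [posLog, lnPlus, cayley, circleMap, zero_add, mul_comm, max_comm]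

end Cayley

namespace MemNevanlinna

variable {h : ℂ → ℂ}

lemma analyticOnNhd_comp_cayley (hh : MemNevanlinna h) :
    AnalyticOnNhd ℂ (h ∘ cayley) (ball 0 1) :=
  (hh.1.comp (differentiableOn_cayley.mono fun _ hw ↦
    one_add_ne_zero_of_norm_lt_one (mem_ball_zero_iff.mp hw)) mapsTo_cayley_ball).analyticOnNhd
      isOpen_ball

lemma exists_circleAverage_log_norm_comp_cayley_le (hh : MemNevanlinna h) :
    ∃ B, ∀ r ∈ Set.Ioo (0 : ℝ) 1, circleAverage (log ‖(h ∘ cayley) ·‖) 0 r ≤ B := by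
  obtain ⟨B, hB⟩ := hh.2
  refine ⟨(2 * π)⁻¹ * B, fun r hr ↦ ?_⟩
  have hsphere : sphere (0 : ℂ) |r| ⊆ ball 0 1 :=
    sphere_subset_closedBall.trans (closedBall_subset_ball (by rw [abs_of_pos hr.1]; exact hr.2))
  calc circleAverage (log ‖(h ∘ cayley) ·‖) 0 r
    _ ≤ circleAverage (log⁺ ‖(h ∘ cayley) ·‖) 0 r :=
      circleAverage_log_norm_le_circleAverage_posLog_norm
        (hh.analyticOnNhd_comp_cayley.mono hsphere).meromorphicOn
    _ ≤ (2 * π)⁻¹ * B := by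
      simp only [Function.comp_apply, circleAverage_posLog_norm_comp_cayley]
      gcongr
      exact hB r hr

end MemNevanlinna

theorem stmt_11_general {h : ℂ → ℂ} (hh : MemNevanlinna h) {ι : Type*} {z : ι → ℂ}
    (hinj : z.Injective) (hz : ∀ i, z i ∈ PiPlus)
    (hdiv : ¬ Summable fun i ↦ (z i).re / (1 + ‖z i‖ ^ 2)) (hzero : ∀ i, h (z i) = 0) :
    ∀ w ∈ PiPlus, h w = 0 := by
  by_contra! ⟨w, hw, hne⟩
  obtain ⟨B, hB⟩ := hh.exists_circleAverage_log_norm_comp_cayley_le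
  have hne_disc : ∃ v ∈ ball (0 : ℂ) 1, (h ∘ cayley) v ≠ 0 :=
    ⟨cayley w, mapsTo_cayley_piPlus hw, by
      rwa [Function.comp_apply, cayley_cayley (one_add_ne_zero_of_re_pos hw)]⟩
  have hz' i : 1 + z i ≠ 0 := one_add_ne_zero_of_re_pos (hz i)
  have hinj_disc : Function.Injective fun i ↦ cayley (z i) := fun i j hij ↦
    hinj (cayley_injOn (hz' i) (hz' j) hij)
  have hblaschke : Summable fun i ↦ 1 - ‖0 - cayley (z i)‖ :=
    summable_sub_norm_of_zeros hh.analyticOnNhd_comp_cayley hB hne_disc hinj_disc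
      (fun i ↦ mapsTo_cayley_piPlus (hz i)) fun i ↦ by
        rw [Function.comp_apply, cayley_cayley (hz' i), hzero i]
  simp only [zero_sub, norm_neg] at hblaschke
  exact hdiv (hblaschke.of_nonneg_of_le
    (fun i ↦ div_nonneg (le_of_lt (hz i)) (by positivity)) fun i ↦ re_div_one_add_norm_sq_le (hz i))

/-- A function of the Nevanlinna class `N(Π⁺)` vanishing on a subset
`L ⊆ ℕ*` satisfying the Müntz condition `Σ_{n∈L} 1/n = ∞` vanishes identically on `Π⁺`. -/
theorem stmt_11 (h : ℂ → ℂ) (hh : MemNevanlinna h)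
    (L : Set ℕ) (hL0 : ∀ n ∈ L, 0 < n)
    (hMuntz : ¬ Summable fun n : L => (1 : ℝ) / ((n : ℕ) : ℝ))
    (hzero : ∀ n ∈ L, h (n : ℕ) = 0) :
    ∀ z ∈ PiPlus, h z = 0 := by
  refine stmt_11_general hh (z := fun n : L ↦ ((n : ℕ) : ℂ))
    (Nat.cast_injective.comp Subtype.val_injective)
    (fun n ↦ by simpa [PiPlus] using hL0 n n.2) (fun hsum ↦ hMuntz ?_) fun n ↦ hzero n n.2
  refine (hsum.mul_left 2).of_nonneg_of_le (fun n ↦ by positivity) fun n ↦ ?_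
  simpa using one_div_le_two_mul_div_one_add_sq (Nat.one_le_cast.mpr (hL0 n n.2))
end

section
/- Let M, M̃ > 0, Q, Q̃ ∈ ℝ, Λ, Λ̃ > 0, and let λ, q ∈ ℝ with λ ≠ 0 and q ≠ 0. Write F = F_{M,Q,Λ} and F̃ = F_{M̃,Q̃,Λ̃}. Suppose there is a nonempty open interval I ⊂ (0, ∞) such that F(r) > 0 and F̃(r) > 0 for all r ∈ I and (qQ − λr)/√(F(r)) = (qQ̃ − λr)/√(F̃(r)) for all r ∈ I. Then M = M̃, Q = Q̃ and Λ = Λ̃. -/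
/-- The de Sitter–Reissner–Nordström potential `F_{M,Q,Λ}(r) = 1 − 2M/r + Q²/r² − Λr²/3`. -/
noncomputable def Fpot (M Q Λ r : ℝ) : ℝ := 1 - 2 * M / r + Q ^ 2 / r ^ 2 - Λ * r ^ 2 / 3

/-!
Squaring the hypothesis and clearing denominators turns it into an identity between two
polynomials of degree six in `r`, valid at infinitely many points and hence identically.
Comparing coefficients of `r ^ 6`, `r ^ 5` and `r ^ 3` determines `Λ`, `Q` and `M`, in this order.
-/

open Polynomial

/-- The polynomial `r² F(r)`, whose positive roots are the horizon radii, in terms of the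
coefficients `m = 2M`, `e = Q²` and `c = Λ/3`, so that it makes sense over any commutative ring. -/
noncomputable def horizonQuartic {R : Type*} [CommRing R] (m e c : R) : R[X] :=
  X ^ 2 - C m * X + C e - C c * X ^ 4

namespace horizonQuartic

section CommRing

variable {R : Type*} [CommRing R] (a b m e c : R)

theorem sq_mul_eq_sum :
    (C a - C b * X) ^ 2 * horizonQuartic m e c =
      C (-(b ^ 2 * c)) * X ^ 6 + C (2 * a * b * c) * X ^ 5 + C (b ^ 2 - a ^ 2 * c) * X ^ 4
        + C (-(2 * a * b + b ^ 2 * m)) * X ^ 3 + C (a ^ 2 + 2 * a * b * m + b ^ 2 * e) * X ^ 2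
        + C (-(a ^ 2 * m + 2 * a * b * e)) * X + C (a ^ 2 * e) := by
  simp only [horizonQuartic, C_neg, C_add, C_sub, C_mul, C_pow, C_ofNat]
  ring

theorem coeff_six_sq_mul :
    ((C a - C b * X) ^ 2 * horizonQuartic m e c).coeff 6 = -(b ^ 2 * c) := by
  simp only [sq_mul_eq_sum, coeff_add, coeff_C_mul_X_pow, coeff_C_mul_X, coeff_C]
  norm_num

theorem coeff_five_sq_mul :
    ((C a - C b * X) ^ 2 * horizonQuartic m e c).coeff 5 = 2 * a * b * c := by
  simp only [sq_mul_eq_sum, coeff_add, coeff_C_mul_X_pow, coeff_C_mul_X, coeff_C]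
  norm_num

theorem coeff_three_sq_mul :
    ((C a - C b * X) ^ 2 * horizonQuartic m e c).coeff 3 = -(2 * a * b + b ^ 2 * m) := by
  simp only [sq_mul_eq_sum, coeff_add, coeff_C_mul_X_pow, coeff_C_mul_X, coeff_C]
  norm_num

end CommRing

theorem eq_of_sq_mul_eq_sq_mul {R : Type*} [CommRing R] [IsDomain R] [NeZero (2 : R)]
    {a a' b m m' e e' c c' : R} (hb : b ≠ 0) (hc : c ≠ 0)
    (h : (C a - C b * X) ^ 2 * horizonQuartic m' e' c' =
      (C a' - C b * X) ^ 2 * horizonQuartic m e c) :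
    m = m' ∧ a = a' ∧ c = c' := by
  have coeff_six := congrArg (coeff · 6) h
  have coeff_five := congrArg (coeff · 5) h
  have coeff_three := congrArg (coeff · 3) h
  simp only [coeff_six_sq_mul, coeff_five_sq_mul, coeff_three_sq_mul]
    at coeff_six coeff_five coeff_three
  obtain rfl : c = c' := mul_left_cancel₀ (pow_ne_zero 2 hb) (by linear_combination coeff_six)
  obtain rfl : a = a' :=
    mul_left_cancel₀ (mul_ne_zero (mul_ne_zero two_ne_zero hb) hc)
      (by linear_combination coeff_five)
  have m_eq : m = m' :=
    mul_left_cancel₀ (pow_ne_zero 2 hb) (by linear_combination coeff_three)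
  exact ⟨m_eq, rfl, rfl⟩

theorem eval_eq_sq_mul_Fpot (M Q Λ : ℝ) {r : ℝ} (hr : r ≠ 0) :
    (horizonQuartic (2 * M) (Q ^ 2) (Λ / 3)).eval r = r ^ 2 * Fpot M Q Λ r := by
  simp only [horizonQuartic, Fpot, eval_sub, eval_add, eval_mul, eval_pow, eval_X, eval_C]
  field_simp

end horizonQuartic

theorem sq_mul_eq_sq_mul_of_div_sqrt_eq_div_sqrt {a b x y : ℝ} (hx : 0 < x) (hy : 0 < y)
    (h : a / √x = b / √y) : a ^ 2 * y = b ^ 2 * x := by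
  have h_sq : a ^ 2 / x = b ^ 2 / y := by
    rw [← Real.sq_sqrt hx.le, ← Real.sq_sqrt hy.le, ← div_pow, ← div_pow, h]
  exact (div_eq_div_iff hx.ne' hy.ne').mp h_sq

theorem sq_mul_horizonQuartic_eq_of_infinite {M M' Q Q' Λ Λ' a a' b : ℝ} {S : Set ℝ}
    (hS : S.Infinite) (hS₀ : 0 ∉ S)
    (hpos : ∀ r ∈ S, 0 < Fpot M Q Λ r ∧ 0 < Fpot M' Q' Λ' r)
    (heq : ∀ r ∈ S, (a - b * r) / √(Fpot M Q Λ r) = (a' - b * r) / √(Fpot M' Q' Λ' r)) :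
    (C a - C b * X) ^ 2 * horizonQuartic (2 * M') (Q' ^ 2) (Λ' / 3) =
      (C a' - C b * X) ^ 2 * horizonQuartic (2 * M) (Q ^ 2) (Λ / 3) := by
  refine eq_of_infinite_eval_eq _ _ (hS.mono fun r hr => ?_)
  have hr₀ : r ≠ 0 := ne_of_mem_of_not_mem hr hS₀
  have h_sq := sq_mul_eq_sq_mul_of_div_sqrt_eq_div_sqrt (hpos r hr).1 (hpos r hr).2 (heq r hr)
  simp only [Set.mem_ofPred_eq, eval_mul, eval_pow, eval_sub, eval_C, eval_X,
    horizonQuartic.eval_eq_sq_mul_Fpot _ _ _ hr₀]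
  linear_combination r ^ 2 * h_sq

theorem stmt_13_general {M M' Q Q' Λ Λ' lam q : ℝ} (hΛ : Λ ≠ 0) (hlam : lam ≠ 0) (hq : q ≠ 0)
    {S : Set ℝ} (hS : S.Infinite) (hS₀ : 0 ∉ S)
    (hpos : ∀ r ∈ S, 0 < Fpot M Q Λ r ∧ 0 < Fpot M' Q' Λ' r)
    (heq : ∀ r ∈ S,
      (q * Q - lam * r) / √(Fpot M Q Λ r) = (q * Q' - lam * r) / √(Fpot M' Q' Λ' r)) :
    M = M' ∧ Q = Q' ∧ Λ = Λ' := by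
  obtain ⟨two_mul_M, q_mul_Q, Λ_div_three⟩ :=
    horizonQuartic.eq_of_sq_mul_eq_sq_mul hlam (div_ne_zero hΛ three_ne_zero)
      (sq_mul_horizonQuartic_eq_of_infinite hS hS₀ hpos heq)
  exact ⟨mul_left_cancel₀ two_ne_zero two_mul_M, mul_left_cancel₀ hq q_mul_Q,
    (div_left_inj' three_ne_zero).mp Λ_div_three⟩

/-- If `λ ≠ 0`, `q ≠ 0` and `(qQ − λr)/√F(r) = (qQ̃ − λr)/√F̃(r)` on a
nonempty open subinterval of `(0,∞)` where both `F` and `F̃` are positive, then the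
parameters coincide: `M = M̃`, `Q = Q̃`, `Λ = Λ̃`. -/
theorem stmt_13 (M M' Q Q' Λ Λ' lam q : ℝ)
    (hM : 0 < M) (hM' : 0 < M') (hΛ : 0 < Λ) (hΛ' : 0 < Λ')
    (hlam : lam ≠ 0) (hq : q ≠ 0)
    (r₀ r₁ : ℝ) (hr₀ : 0 < r₀) (hr₀₁ : r₀ < r₁)
    (hpos : ∀ r ∈ Set.Ioo r₀ r₁, 0 < Fpot M Q Λ r ∧ 0 < Fpot M' Q' Λ' r)
    (heq : ∀ r ∈ Set.Ioo r₀ r₁,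
      (q * Q - lam * r) / Real.sqrt (Fpot M Q Λ r)
        = (q * Q' - lam * r) / Real.sqrt (Fpot M' Q' Λ' r)) :
    M = M' ∧ Q = Q' ∧ Λ = Λ' := by
  exact stmt_13_general hΛ.ne' hlam hq (Set.Ioo_infinite hr₀₁) (fun h => hr₀.not_gt h.1) hpos heq
end

section
/- Suppose that for every z ∈ ℂ a Jost function from the right F_R(·, λ, z) exists. Then for every compact subinterval [X₀, X₁] ⊂ (0, A) there exist constants C > 0 and R > 0 such that for all z ∈ ℂ with |z| ≥ R and all X ∈ [X₀, X₁]: ‖F_{R1}(h(X), λ, z) − (κ_- /a_-)^{iθ}·B_{ν_-}(z, X)·I₂‖ ≤ C·e^{|Re(z)|·X}/|z|; ‖F_{R2}(h(X), λ, z) − i·(κ_- /a_-)^{−iθ}·D_{μ_-}(z, X)·J‖ ≤ C·e^{|Re(z)|·X}/|z|; ‖F_{R3}(h(X), λ, z) − i·(κ_- /a_-)^{iθ}·D_{ν_-}(z, X)·J‖ ≤ C·e^{|Re(z)|·X}/|z|; and ‖F_{R4}(h(X), λ, z) − (κ_- /a_-)^{−iθ}·B_{μ_-}(z, X)·I₂‖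 ≤ C·e^{|Re(z)|·X}/|z|, where I₂ is the 2×2 identity matrix, J = [[0, 1], [−1, 0]], and ‖·‖ is the maximum of the entrywise moduli. -/
open Asymptotics Filter MeasureTheory Matrix

/-- The Dirac matrix `Γ¹ = diag(1,1,−1,−1)`. -/
noncomputable def Gamma1 : Matrix (Fin 4) (Fin 4) ℂ :=
  !![1, 0, 0, 0; 0, 1, 0, 0; 0, 0, -1, 0; 0, 0, 0, -1]

/-- The Dirac matrix `Γ²`. -/
noncomputable def Gamma2 : Matrix (Fin 4) (Fin 4) ℂ :=
  !![0, 0, 0, 1; 0, 0, -1, 0; 0, -1, 0, 0; 1, 0, 0, 0]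

/-- The Dirac matrix `Γ⁰`. -/
noncomputable def Gamma0 : Matrix (Fin 4) (Fin 4) ℂ :=
  !![0, 0, -Complex.I, 0; 0, 0, 0, Complex.I; Complex.I, 0, 0, 0; 0, -Complex.I, 0, 0]

/-- `e^{Γ¹s} = diag(e^s, e^s, e^{−s}, e^{−s})`, the exponential of `s·Γ¹`. -/
noncomputable def expG1 (s : ℂ) : Matrix (Fin 4) (Fin 4) ℂ :=
  Matrix.diagonal ![Complex.exp s, Complex.exp s, Complex.exp (-s), Complex.exp (-s)]

/-- Entrywise derivative of a matrix-valued function of a real variable. -/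
noncomputable def matDeriv (F : ℝ → Matrix (Fin 4) (Fin 4) ℂ) (t : ℝ) :
    Matrix (Fin 4) (Fin 4) ℂ :=
  Matrix.of fun i j => deriv (fun s => F s i j) t

/-- `F` is a Jost function from the right for the stationary Dirac equation with
potentials `a`, `b`, `c`, phase `C⁻ = Cm`, energy `λ = lam` and angular momentum `z`:
a `C¹` solution of `(−iΓ¹ d/dx − z·a·Γ² + b·Γ⁰ + c)F = λF` with
`e^{iΓ¹C⁻(x)}·F(x)·e^{−iΓ¹λx} → I₄` as `x → −∞`. -/
def IsJostRight (a b c Cm : ℝ → ℝ) (lam : ℝ) (z : ℂ)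
    (F : ℝ → Matrix (Fin 4) (Fin 4) ℂ) : Prop :=
  (∀ i j : Fin 4, ContDiff ℝ 1 fun t => F t i j) ∧
  (∀ t : ℝ, (-Complex.I) • (Gamma1 * matDeriv F t) - (z * ((a t : ℝ) : ℂ)) • (Gamma2 * F t)
      + ((b t : ℝ) : ℂ) • (Gamma0 * F t) + ((c t : ℝ) : ℂ) • F t = ((lam : ℝ) : ℂ) • F t) ∧
  (∀ i j : Fin 4, Filter.Tendsto
      (fun t => (expG1 (Complex.I * ((Cm t : ℝ) : ℂ)) * F t *
        expG1 (-(Complex.I * ((lam : ℝ) : ℂ) * ((t : ℝ) : ℂ)))) i j)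
      Filter.atBot (nhds ((1 : Matrix (Fin 4) (Fin 4) ℂ) i j)))

/-- The `2×2` block of a `4×4` matrix in block position `(p,q)`. -/
def blk (F : Matrix (Fin 4) (Fin 4) ℂ) (p q : Fin 2) : Matrix (Fin 2) (Fin 2) ℂ :=
  Matrix.of fun i j =>
    F ⟨2 * (p : ℕ) + (i : ℕ), by have := p.isLt; have := i.isLt; omega⟩
      ⟨2 * (q : ℕ) + (j : ℕ), by have := q.isLt; have := j.isLt; omega⟩

/-- The maximum of the moduli of the entries of a `2×2` complex matrix. -/
noncomputable def mnorm2 (M : Matrix (Fin 2) (Fin 2) ℂ) : ℝ :=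
  max (max (‖M 0 0‖) (‖M 0 1‖))
      (max (‖M 1 0‖) (‖M 1 1‖))

/-- The matrix `J = [[0,1],[−1,0]]`. -/
noncomputable def Jmat : Matrix (Fin 2) (Fin 2) ℂ := !![0, 1; -1, 0]

/-- `B_ν(z,X) = Γ(1−ν)·Σ_{k≥0} X^{1/2−ν+2k}·(z/2)^{2k}/(Γ(k+1−ν)·k!)`, entire in `z`,
with `X^w = e^{w·log X}`. -/
noncomputable def Bfun (ν z : ℂ) (X : ℝ) : ℂ :=
  Complex.Gamma (1 - ν) * ∑' k : ℕ,
    Complex.exp (((1 : ℂ) / 2 - ν + 2 * (k : ℂ)) * ((Real.log X : ℝ) : ℂ)) * (z / 2) ^ (2 * k)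
      / (Complex.Gamma ((k : ℂ) + 1 - ν) * (Nat.factorial k : ℂ))

/-- `D_ν(z,X) = Γ(1−ν)·Σ_{k≥0} X^{3/2−ν+2k}·(z/2)^{1+2k}/(Γ(k+2−ν)·k!)`, entire in `z`,
with `X^w = e^{w·log X}`. -/
noncomputable def Dfun (ν z : ℂ) (X : ℝ) : ℂ :=
  Complex.Gamma (1 - ν) * ∑' k : ℕ,
    Complex.exp (((3 : ℂ) / 2 - ν + 2 * (k : ℂ)) * ((Real.log X : ℝ) : ℂ)) * (z / 2) ^ (1 + 2 * k)
      / (Complex.Gamma ((k : ℂ) + 2 - ν) * (Nat.factorial k : ℂ))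

/-!
For `σ = ±1` the combinations `F₀ + σF₁` and `i(F₃ - σF₂)` of the rows of a Jost function decouple
the `4 × 4` equation into two Dirac systems `U' = iℓU + zaW - iσaμW`, `W' = -iℓW + zaU + iσaμU`,
with `ℓ = λ - c` and mass `μ = m r`. Write `ℓ = θa/g + ap`, where `g` is the primitive of `a`. In
the variable `X = g`, the system with `p = μ = 0` is a Bessel equation solved by `B_ν` and `D_ν`,
and `log g = κt + log (a₀ / κ) + o(1)` at the horizon fixes the prefactors `(κ / a₀)^{±iθ}`.

The perturbation `ap`, `aμ` is integrable but not small in `z`; however it oscillates against the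
free evolution, and one integration by parts gains the factor `1 / |z|`: adding to `U` and `W` a
corrector of size `O(1 / |z|)` leaves a free system with a source that is `O(a / |z|)`. Grönwall's
inequality from the horizon, for solutions weighted by `e^{-|Re z| g}`, then compares with the
model. The bounds `p = O(g)` and `p' = O(a)` near the horizon, where both `ℓ / a` and `θ / g` blow
up, hold because `a = κg + O(g³)`.
-/

section AsymptoticsAtBot

variable {f f' h h' : ℝ → ℝ}

theorem nonneg_of_deriv_nonneg_of_tendsto_atBot {T : ℝ} (hf : ∀ t, HasDerivAt f (f' t) t)
    (hf' : ∀ t ≤ T, 0 ≤ f' t) (hlim : Tendsto f atBot (nhds 0)) {t : ℝ} (ht : t ≤ T) :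
    0 ≤ f t := by
  have hmono : MonotoneOn f (Set.Iic T) := by
    refine monotoneOn_of_deriv_nonneg (convex_Iic T)
      (fun s _ => (hf s).continuousAt.continuousWithinAt)
      (fun s _ => (hf s).differentiableAt.differentiableWithinAt) fun s hs => ?_
    rw [interior_Iic] at hs
    exact (hf s).deriv ▸ hf' s hs.le
  refine le_of_tendsto hlim ?_
  filter_upwards [eventually_le_atBot t] with s hs
  exact hmono (hs.trans ht) ht hs

theorem isBigO_atBot_of_deriv (hf : ∀ t, HasDerivAt f (f' t) t) (hh : ∀ t, HasDerivAt h (h' t) t)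
    (hh' : ∀ t, 0 ≤ h' t) (hO : f' =O[atBot] h') (hf0 : Tendsto f atBot (nhds 0))
    (hh0 : Tendsto h atBot (nhds 0)) : f =O[atBot] h := by
  obtain ⟨C, hC⟩ := hO.bound
  obtain ⟨T, hT⟩ := eventually_atBot.mp hC
  have hbound : ∀ t ≤ T, |f' t| ≤ C * h' t := fun t ht => by
    simpa only [Real.norm_eq_abs, abs_of_nonneg (hh' t)] using hT t ht
  refine .of_bound C (eventually_atBot.mpr ⟨T, fun t ht => ?_⟩)
  have hadd : 0 ≤ C * h t + f t :=
    nonneg_of_deriv_nonneg_of_tendsto_atBot (fun s => ((hh s).const_mul C).fun_add (hf s))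
      (fun s hs => by linarith [neg_le_of_abs_le (hbound s hs)])
      (by simpa using (hh0.const_mul C).add hf0) ht
  have hsub : 0 ≤ C * h t - f t :=
    nonneg_of_deriv_nonneg_of_tendsto_atBot (fun s => ((hh s).const_mul C).fun_sub (hf s))
      (fun s hs => by linarith [le_of_abs_le (hbound s hs)])
      (by simpa using (hh0.const_mul C).sub hf0) ht
  have hh_nonneg : 0 ≤ h t :=
    nonneg_of_deriv_nonneg_of_tendsto_atBot hh (fun s _ => hh' s) hh0 le_rfl
  rw [Real.norm_eq_abs, Real.norm_eq_abs, abs_of_nonneg hh_nonneg]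
  exact abs_le.mpr ⟨by linarith, by linarith⟩

theorem exists_abs_le_mul_of_isBigO_atBot (hf : Continuous f) (hh : Continuous h)
    (hpos : ∀ t, 0 < h t) (hO : f =O[atBot] h) (x₁ : ℝ) : ∃ K, ∀ t ≤ x₁, |f t| ≤ K * h t := by
  obtain ⟨C, hC⟩ := hO.bound
  obtain ⟨T, hT⟩ := eventually_atBot.mp hC
  obtain ⟨D, hD⟩ := isCompact_Icc.exists_bound_of_continuousOn (s := Set.Icc T x₁)
    (hf.div hh fun t => (hpos t).ne').continuousOn
  refine ⟨max C D, fun t ht => ?_⟩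
  rcases le_total t T with htT | hTt
  · have := hT t htT
    rw [Real.norm_eq_abs, Real.norm_eq_abs, abs_of_pos (hpos t)] at this
    exact this.trans (mul_le_mul_of_nonneg_right (le_max_left C D) (hpos t).le)
  · have := hD t ⟨hTt, ht⟩
    rw [Pi.div_apply, Real.norm_eq_abs, abs_div, abs_of_pos (hpos t), div_le_iff₀ (hpos t)] at this
    exact this.trans (mul_le_mul_of_nonneg_right (le_max_right C D) (hpos t).le)

end AsymptoticsAtBot

section Primitive

variable {a : ℝ → ℝ}

theorem hasDerivAt_integral_Iic (hcont : Continuous a) (hint : Integrable a) (t : ℝ) :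
    HasDerivAt (fun t => ∫ s in Set.Iic t, a s) (a t) t := by
  have hsplit : (fun t => ∫ s in Set.Iic t, a s) =
      fun t => (∫ s in Set.Iic 0, a s) + ∫ s in (0 : ℝ)..t, a s := funext fun t => by
    rw [← intervalIntegral.integral_Iic_sub_Iic hint.integrableOn hint.integrableOn]
    ring
  rw [hsplit]
  exact (intervalIntegral.integral_hasDerivAt_right hint.intervalIntegrable
    (hcont.stronglyMeasurableAtFilter _ _) hcont.continuousAt).const_add _

theorem strictMono_integral_Iic (hcont : Continuous a) (hint : Integrable a)
    (hpos : ∀ t, 0 < a t) : StrictMono fun t => ∫ s in Set.Iic t, a s :=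
  strictMono_of_deriv_pos fun t => (hasDerivAt_integral_Iic hcont hint t).deriv ▸ hpos t

theorem integral_Iic_pos (hcont : Continuous a) (hint : Integrable a) (hpos : ∀ t, 0 < a t)
    (t : ℝ) : 0 < ∫ s in Set.Iic t, a s :=
  (setIntegral_nonneg measurableSet_Iic fun s _ => (hpos s).le).trans_lt
    (strictMono_integral_Iic hcont hint hpos (sub_one_lt t))

end Primitive

section DiracSystem

open Complex

/-- The two-component Dirac system `U' = iℓU + zaW + ρ₁`, `W' = −iℓW + zaU + ρ₂` on the line, with
phase `ℓ`, coupling `z·a` and sources `ρ₁`, `ρ₂`. The sources may depend on the solution, which is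
how mass terms are encoded. -/
structure IsDiracSolution (a ℓ : ℝ → ℝ) (z : ℂ) (ρ₁ ρ₂ U W : ℝ → ℂ) : Prop where
  hasDerivAt_fst : ∀ t, HasDerivAt U (I * ℓ t * U t + z * a t * W t + ρ₁ t) t
  hasDerivAt_snd : ∀ t, HasDerivAt W (-(I * ℓ t) * W t + z * a t * U t + ρ₂ t) t

/-- The homogeneous Dirac system with an additional mass term of size `a·μ`. -/
abbrev IsMassiveDiracSolution (a ℓ μ : ℝ → ℝ) (z : ℂ) (U W : ℝ → ℂ) : Prop :=
  IsDiracSolution a ℓ z (fun t => -(I * (a t * μ t)) * W t) (fun t => I * (a t * μ t) * U t) U W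

/-- The homogeneous massless Dirac system. -/
abbrev IsFreeDiracSolution (a ℓ : ℝ → ℝ) (z : ℂ) (U W : ℝ → ℂ) : Prop :=
  IsDiracSolution a ℓ z 0 0 U W

variable {a g ℓ η μ p : ℝ → ℝ} {z : ℂ} {ρ₁ ρ₂ ρ₃ ρ₄ U W u w : ℝ → ℂ}

theorem IsDiracSolution.swap (h : IsDiracSolution a ℓ z ρ₁ ρ₂ U W) :
    IsDiracSolution a (-ℓ) z ρ₂ ρ₁ W U where
  hasDerivAt_fst t := (h.hasDerivAt_snd t).congr_deriv (by simp)
  hasDerivAt_snd t := (h.hasDerivAt_fst t).congr_deriv (by simp)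

theorem IsDiracSolution.sub (h : IsDiracSolution a ℓ z ρ₁ ρ₂ U W)
    (h' : IsDiracSolution a ℓ z ρ₃ ρ₄ u w) :
    IsDiracSolution a ℓ z (ρ₁ - ρ₃) (ρ₂ - ρ₄) (U - u) (W - w) where
  hasDerivAt_fst t := ((h.hasDerivAt_fst t).sub (h'.hasDerivAt_fst t)).congr_deriv (by
    simp only [Pi.sub_apply]; ring)
  hasDerivAt_snd t := ((h.hasDerivAt_snd t).sub (h'.hasDerivAt_snd t)).congr_deriv (by
    simp only [Pi.sub_apply]; ring)

theorem IsFreeDiracSolution.const_mul (α : ℂ) (h : IsFreeDiracSolution a ℓ z U W) :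
    IsFreeDiracSolution a ℓ z (fun t => α * U t) (fun t => α * W t) where
  hasDerivAt_fst t := ((h.hasDerivAt_fst t).const_mul α).congr_deriv (by
    simp only [Pi.zero_apply]; ring)
  hasDerivAt_snd t := ((h.hasDerivAt_snd t).const_mul α).congr_deriv (by
    simp only [Pi.zero_apply]; ring)

theorem IsFreeDiracSolution.add (h : IsFreeDiracSolution a ℓ z U W)
    (h' : IsFreeDiracSolution a ℓ z u w) :
    IsFreeDiracSolution a ℓ z (fun t => U t + u t) (fun t => W t + w t) where
  hasDerivAt_fst t := ((h.hasDerivAt_fst t).add (h'.hasDerivAt_fst t)).congr_deriv (by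
    simp only [Pi.zero_apply]; ring)
  hasDerivAt_snd t := ((h.hasDerivAt_snd t).add (h'.hasDerivAt_snd t)).congr_deriv (by
    simp only [Pi.zero_apply]; ring)

theorem IsMassiveDiracSolution.swap (h : IsMassiveDiracSolution a ℓ μ z U W) :
    IsMassiveDiracSolution a (-ℓ) (-μ) z W U where
  hasDerivAt_fst t := (h.hasDerivAt_snd t).congr_deriv (by simp)
  hasDerivAt_snd t := (h.hasDerivAt_fst t).congr_deriv (by simp)

theorem two_mul_real_inner_le {E : Type*} [NormedAddCommGroup E] [InnerProductSpace ℝ E]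
    {c : ℝ} (hc : 0 < c) (u v : E) : 2 * inner ℝ u v ≤ c * ‖u‖ ^ 2 + ‖v‖ ^ 2 / c := by
  have hsq : 0 ≤ (c * ‖u‖ - ‖v‖) ^ 2 / c := by positivity
  have hexpand : (c * ‖u‖ - ‖v‖) ^ 2 / c = c * ‖u‖ ^ 2 + ‖v‖ ^ 2 / c - 2 * (‖u‖ * ‖v‖) := by
    field_simp
    ring
  linarith [real_inner_le_norm u v]

theorem abs_two_mul_real_inner_le {E : Type*} [NormedAddCommGroup E] [InnerProductSpace ℝ E]
    (u v : E) : |2 * inner ℝ u v| ≤ ‖u‖ ^ 2 + ‖v‖ ^ 2 := by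
  rw [abs_mul, abs_two]
  linarith [abs_real_inner_le_norm u v, two_mul_le_add_sq ‖u‖ ‖v‖]

-- The phase `ℓ` and the imaginary part of `z` drop out: they generate unitary evolutions.
theorem IsDiracSolution.hasDerivAt_energy (h : IsDiracSolution a ℓ z ρ₁ ρ₂ U W) (t : ℝ) :
    HasDerivAt (fun t => ‖U t‖ ^ 2 + ‖W t‖ ^ 2)
      (2 * z.re * a t * (2 * inner ℝ (U t) (W t))
        + (2 * inner ℝ (U t) (ρ₁ t) + 2 * inner ℝ (W t) (ρ₂ t))) t := by
  refine ((h.hasDerivAt_fst t).norm_sq.add (h.hasDerivAt_snd t).norm_sq).congr_deriv ?_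
  simp only [Complex.inner, add_re, mul_re, conj_re, conj_im, I_re, I_im, ofReal_re, ofReal_im,
    mul_im, neg_re, neg_im, add_im]
  ring

theorem IsDiracSolution.deriv_energy_le (h : IsDiracSolution a ℓ z ρ₁ ρ₂ U W) {t : ℝ}
    (ha : 0 < a t) :
    deriv (fun t => ‖U t‖ ^ 2 + ‖W t‖ ^ 2) t ≤
      (2 * |z.re| + 1) * a t * (‖U t‖ ^ 2 + ‖W t‖ ^ 2) + (‖ρ₁ t‖ ^ 2 + ‖ρ₂ t‖ ^ 2) / a t := by
  rw [(h.hasDerivAt_energy t).deriv]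
  have hcross : 2 * z.re * a t * (2 * inner ℝ (U t) (W t)) ≤
      2 * |z.re| * a t * (‖U t‖ ^ 2 + ‖W t‖ ^ 2) :=
    calc _ ≤ |2 * z.re * a t * (2 * inner ℝ (U t) (W t))| := le_abs_self _
      _ = 2 * |z.re| * a t * |2 * inner ℝ (U t) (W t)| := by
        rw [abs_mul, abs_mul, abs_mul, abs_two, abs_of_pos ha]
      _ ≤ _ := by gcongr; exact abs_two_mul_real_inner_le _ _
  have hρ₁ := two_mul_real_inner_le ha (U t) (ρ₁ t)
  have hρ₂ := two_mul_real_inner_le ha (W t) (ρ₂ t)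
  rw [add_div]
  linarith

theorem le_exp_mul_of_deriv_le {E : ℝ → ℝ} {L G E₀ ω x₁ : ℝ} (ha : ∀ t, 0 ≤ a t)
    (hg : ∀ t, HasDerivAt g (a t) t) (hg0 : ∀ t, 0 ≤ g t) (hL : 0 ≤ L) (hωL : ω ≤ L) (hG : 0 ≤ G)
    (hE0 : ∀ t, 0 ≤ E t) (hE : Differentiable ℝ E)
    (hE' : ∀ t ≤ x₁, deriv E t ≤ a t * (L * E t + G * Real.exp (ω * g t)))
    (hlim : ∀ᶠ t in atBot, E t ≤ E₀) {t : ℝ} (ht : t ≤ x₁) :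
    E t ≤ Real.exp (L * g t) * (E₀ + G * g t) := by
  set H : ℝ → ℝ := fun t => E t * Real.exp (-L * g t) - G * g t with hH
  have hH' : ∀ t, HasDerivAt H (deriv E t * Real.exp (-L * g t)
      + E t * (Real.exp (-L * g t) * (-L * a t)) - G * a t) t := fun t =>
    ((hE t).hasDerivAt.mul ((hg t).const_mul (-L)).exp).sub ((hg t).const_mul G)
  have hanti : AntitoneOn H (Set.Iic x₁) := by
    refine antitoneOn_of_deriv_nonpos (convex_Iic x₁)
      (fun t _ => (hH' t).continuousAt.continuousWithinAt)
      (fun t _ => (hH' t).differentiableAt.differentiableWithinAt) fun t ht => ?_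
    rw [interior_Iic] at ht
    rw [(hH' t).deriv]
    have hgrowth := mul_le_mul_of_nonneg_right (hE' t ht.le) (Real.exp_pos (-L * g t)).le
    have hdecay : Real.exp (ω * g t) * Real.exp (-L * g t) ≤ 1 := by
      rw [← Real.exp_add, Real.exp_le_one_iff]
      nlinarith [mul_le_mul_of_nonneg_right hωL (hg0 t)]
    have hsource := mul_le_mul_of_nonneg_left hdecay (mul_nonneg hG (ha t))
    linarith
  have hHt : H t ≤ E₀ := by
    obtain ⟨s, hs, hst⟩ := (hlim.and (eventually_le_atBot t)).exists
    have hexp : E s * Real.exp (-L * g s) ≤ E s * 1 := by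
      refine mul_le_mul_of_nonneg_left ?_ (hE0 s)
      rw [Real.exp_le_one_iff]
      nlinarith [mul_nonneg hL (hg0 s)]
    calc H t ≤ H s := hanti (hst.trans ht) ht hst
      _ ≤ E₀ := by simp only [hH]; linarith [mul_nonneg hG (hg0 s)]
  calc E t = Real.exp (L * g t) * (E t * Real.exp (-L * g t)) := by
        rw [mul_left_comm, ← Real.exp_add]; simp
    _ ≤ _ := by gcongr; simp only [hH] at hHt; linarith

theorem IsDiracSolution.energy_le {K G E₀ x₁ : ℝ} (h : IsDiracSolution a ℓ z ρ₁ ρ₂ U W)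
    (ha : ∀ t, 0 < a t) (hg : ∀ t, HasDerivAt g (a t) t) (hg0 : ∀ t, 0 ≤ g t) (hK : 0 ≤ K)
    (hG : 0 ≤ G)
    (hρ : ∀ t ≤ x₁, ‖ρ₁ t‖ ^ 2 + ‖ρ₂ t‖ ^ 2 ≤
      a t ^ 2 * (K * (‖U t‖ ^ 2 + ‖W t‖ ^ 2) + G * Real.exp (2 * |z.re| * g t)))
    (hlim : ∀ᶠ t in atBot, ‖U t‖ ^ 2 + ‖W t‖ ^ 2 ≤ E₀) {t : ℝ} (ht : t ≤ x₁) :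
    ‖U t‖ ^ 2 + ‖W t‖ ^ 2 ≤ Real.exp ((2 * |z.re| + 1 + K) * g t) * (E₀ + G * g t) := by
  refine le_exp_mul_of_deriv_le (fun t => (ha t).le) hg hg0 (by positivity)
    (by linarith : 2 * |z.re| ≤ _) hG (fun t => by positivity)
    (fun t => (h.hasDerivAt_energy t).differentiableAt) (fun t ht => ?_) hlim ht
  refine (h.deriv_energy_le (ha t)).trans ?_
  have hsource := div_le_div_of_nonneg_right (hρ t ht) (ha t).le
  have hcancel : a t ^ 2 * (K * (‖U t‖ ^ 2 + ‖W t‖ ^ 2) + G * Real.exp (2 * |z.re| * g t)) / a t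
      = a t * (K * (‖U t‖ ^ 2 + ‖W t‖ ^ 2) + G * Real.exp (2 * |z.re| * g t)) := by
    have := (ha t).ne'
    field_simp
  linarith

/-- The `1/z` term of the near-identity change of unknowns that removes, to leading order in `z`,
a mass `μ` and a phase perturbation `a·p` from the Dirac system. -/
noncomputable def diracCorrector (z : ℂ) (μ p : ℝ → ℝ) (U W : ℝ → ℂ) (t : ℝ) : ℂ :=
  z⁻¹ * (I * μ t / 2 * U t + -(I * p t / 2) * W t)

/-- The source left over after the change of unknowns by `diracCorrector`. -/
noncomputable def diracRemainder (a η μ p : ℝ → ℝ) (z : ℂ) (U W : ℝ → ℂ) (t : ℝ) : ℂ :=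
  z⁻¹ * (I * deriv μ t / 2 * U t
    + (-(I * deriv p t / 2) + a t * μ t ^ 2 / 2 - a t * p t ^ 2 / 2 - p t * η t) * W t)

theorem IsMassiveDiracSolution.hasDerivAt_add_corrector (hz : z ≠ 0) (hμ : Differentiable ℝ μ)
    (hp : Differentiable ℝ p) (h : IsMassiveDiracSolution a (a * p + η) μ z U W) (t : ℝ) :
    HasDerivAt (U + diracCorrector z μ p U W)
      (I * η t * (U + diracCorrector z μ p U W) t
        + z * a t * (W + diracCorrector z (-μ) (-p) W U) t + diracRemainder a η μ p z U W t) t := by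
  have hmass := (((hμ t).hasDerivAt.ofReal_comp.const_mul I).div_const 2).mul (h.hasDerivAt_fst t)
  have hphase :=
    (((hp t).hasDerivAt.ofReal_comp.const_mul I).div_const 2).neg.mul (h.hasDerivAt_snd t)
  refine ((h.hasDerivAt_fst t).add ((hmass.add hphase).const_mul z⁻¹)).congr_deriv ?_
  simp only [diracCorrector, diracRemainder, Pi.add_apply, Pi.mul_apply, Pi.neg_apply, ofReal_add,
    ofReal_mul, ofReal_neg]
  field_simp
  linear_combination (a t * p t ^ 2 * W t - a t * μ t ^ 2 * W t + 2 * p t * η t * W t) * I_sq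

theorem IsMassiveDiracSolution.normalForm (hz : z ≠ 0) (hμ : Differentiable ℝ μ)
    (hp : Differentiable ℝ p) (h : IsMassiveDiracSolution a (a * p + η) μ z U W) :
    IsDiracSolution a η z (diracRemainder a η μ p z U W)
      (diracRemainder a (-η) (-μ) (-p) z W U)
      (U + diracCorrector z μ p U W) (W + diracCorrector z (-μ) (-p) W U) where
  hasDerivAt_fst := h.hasDerivAt_add_corrector hz hμ hp
  hasDerivAt_snd t := by
    have hswap : IsMassiveDiracSolution a (a * -p + -η) (-μ) z W U := by
      convert h.swap using 1
      ring
    simpa using hswap.hasDerivAt_add_corrector hz hμ.neg hp.neg t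

theorem IsDiracSolution.norm_le {K A δ r x₁ : ℝ} (h : IsDiracSolution a ℓ z ρ₁ ρ₂ U W)
    (ha : ∀ t, 0 < a t) (hg : ∀ t, HasDerivAt g (a t) t) (hg0 : ∀ t, 0 ≤ g t) (hgA : ∀ t, g t ≤ A)
    (hK : 0 ≤ K) (hr : 0 ≤ r)
    (hρ : ∀ t ≤ x₁, ‖ρ₁ t‖ ^ 2 + ‖ρ₂ t‖ ^ 2 ≤
      a t ^ 2 * (K * (‖U t‖ ^ 2 + ‖W t‖ ^ 2) + 2 * r ^ 2 * Real.exp (2 * |z.re| * g t)))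
    (hδ : 0 ≤ δ) (hU : ∀ᶠ t in atBot, ‖U t‖ ≤ δ) (hW : ∀ᶠ t in atBot, ‖W t‖ ≤ δ)
    {t : ℝ} (ht : t ≤ x₁) :
    ‖U t‖ ≤ 2 * Real.exp ((1 + K) * A) * (δ + r * (1 + A)) * Real.exp (|z.re| * g t) ∧
      ‖W t‖ ≤ 2 * Real.exp ((1 + K) * A) * (δ + r * (1 + A)) * Real.exp (|z.re| * g t) := by
  have hA : 0 ≤ A := (hg0 t).trans (hgA t)
  have hinit : ∀ᶠ t in atBot, ‖U t‖ ^ 2 + ‖W t‖ ^ 2 ≤ 2 * δ ^ 2 := by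
    filter_upwards [hU, hW] with t hUt hWt
    linarith [pow_le_pow_left₀ (norm_nonneg _) hUt 2, pow_le_pow_left₀ (norm_nonneg _) hWt 2]
  have hexp : Real.exp ((2 * |z.re| + 1 + K) * g t) ≤
      (Real.exp ((1 + K) * A) * Real.exp (|z.re| * g t)) ^ 2 := by
    rw [mul_pow, ← Real.exp_nat_mul, ← Real.exp_nat_mul, ← Real.exp_add, Real.exp_le_exp]
    push_cast
    nlinarith [mul_le_mul_of_nonneg_left (hgA t) (by positivity : 0 ≤ 1 + K),
      mul_nonneg (by positivity : 0 ≤ 1 + K) (hg0 t)]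
  have hsource : 2 * δ ^ 2 + 2 * r ^ 2 * g t ≤ (2 * (δ + r * (1 + A))) ^ 2 := by
    nlinarith [mul_le_mul_of_nonneg_left (hgA t) (sq_nonneg r), mul_nonneg hδ hr,
      mul_nonneg (mul_nonneg hδ hr) hA, mul_nonneg (sq_nonneg r) hA, sq_nonneg (r * A),
      sq_nonneg δ, sq_nonneg r]
  have henergy : ‖U t‖ ^ 2 + ‖W t‖ ^ 2 ≤
      (2 * Real.exp ((1 + K) * A) * (δ + r * (1 + A)) * Real.exp (|z.re| * g t)) ^ 2 :=
    calc _ ≤ _ := h.energy_le ha hg hg0 hK (by positivity) hρ hinit ht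
      _ ≤ (Real.exp ((1 + K) * A) * Real.exp (|z.re| * g t)) ^ 2 * (2 * (δ + r * (1 + A))) ^ 2 :=
        mul_le_mul hexp hsource (add_nonneg (by positivity) (mul_nonneg (by positivity) (hg0 t)))
          (by positivity)
      _ = _ := by ring
  exact ⟨le_of_sq_le_sq (by linarith [sq_nonneg ‖W t‖]) (by positivity),
    le_of_sq_le_sq (by linarith [sq_nonneg ‖U t‖]) (by positivity)⟩

/-- Bounds on `(-∞, x₁]` for the coefficients of a Dirac system with coupling `a = g'`, mass `μ`
and phase `a·p + θa/g`: with respect to the variable `g`, both `μ` and `p` are `K`-Lipschitz, `μ` is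
bounded by `K`, and `p` vanishes to first order. -/
structure DiracPerturbationBound (a g μ p : ℝ → ℝ) (A K x₁ : ℝ) : Prop where
  pos : ∀ t, 0 < a t
  hasDerivAt : ∀ t, HasDerivAt g (a t) t
  primitive_pos : ∀ t, 0 < g t
  primitive_le : ∀ t, g t ≤ A
  differentiable_mass : Differentiable ℝ μ
  differentiable_shift : Differentiable ℝ p
  abs_mass_le : ∀ t ≤ x₁, |μ t| ≤ K
  abs_deriv_mass_le : ∀ t ≤ x₁, |deriv μ t| ≤ K * a t
  abs_shift_le : ∀ t ≤ x₁, |p t| ≤ K * g t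
  abs_deriv_shift_le : ∀ t ≤ x₁, |deriv p t| ≤ K * a t

namespace DiracPerturbationBound

variable {A K x₁ T t : ℝ}

theorem neg_mass (h : DiracPerturbationBound a g μ p A K x₁) :
    DiracPerturbationBound a g (-μ) p A K x₁ where
  __ := h
  differentiable_mass := h.differentiable_mass.neg
  abs_mass_le := by simpa using h.abs_mass_le
  abs_deriv_mass_le := by simpa using h.abs_deriv_mass_le

theorem neg_shift (h : DiracPerturbationBound a g μ p A K x₁) :
    DiracPerturbationBound a g μ (-p) A K x₁ where
  __ := h
  differentiable_shift := h.differentiable_shift.neg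
  abs_shift_le := by simpa using h.abs_shift_le
  abs_deriv_shift_le := by simpa using h.abs_deriv_shift_le

theorem bound_nonneg (h : DiracPerturbationBound a g μ p A K x₁) : 0 ≤ K :=
  (abs_nonneg _).trans (h.abs_mass_le x₁ le_rfl)

theorem primitive_bound_pos (h : DiracPerturbationBound a g μ p A K x₁) : 0 < A :=
  (h.primitive_pos 0).trans_le (h.primitive_le 0)

theorem abs_shift_le_const (h : DiracPerturbationBound a g μ p A K x₁) (ht : t ≤ x₁) :
    |p t| ≤ K * A :=
  (h.abs_shift_le t ht).trans (mul_le_mul_of_nonneg_left (h.primitive_le t) h.bound_nonneg)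

theorem norm_corrector_le (h : DiracPerturbationBound a g μ p A K x₁) (z : ℂ) (ht : t ≤ x₁)
    (hU : ‖U t‖ ≤ T) (hW : ‖W t‖ ≤ T) :
    ‖diracCorrector z μ p U W t‖ ≤ K * (1 + A) * T / ‖z‖ := by
  have hmass : ‖I * μ t / 2 * U t‖ ≤ K * T := by
    have := mul_le_mul (h.abs_mass_le t ht) hU (norm_nonneg _) h.bound_nonneg
    simp only [norm_mul, norm_div, norm_I, norm_real, Real.norm_eq_abs, norm_ofNat]
    linarith [mul_nonneg (abs_nonneg (μ t)) (norm_nonneg (U t))]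
  have hshift : ‖-(I * p t / 2) * W t‖ ≤ K * A * T := by
    have := mul_le_mul (h.abs_shift_le_const ht) hW (norm_nonneg _)
      (mul_nonneg h.bound_nonneg h.primitive_bound_pos.le)
    simp only [norm_neg, norm_mul, norm_div, norm_I, norm_real, Real.norm_eq_abs, norm_ofNat]
    linarith [mul_nonneg (abs_nonneg (p t)) (norm_nonneg (W t))]
  rw [diracCorrector, norm_mul, norm_inv, div_eq_inv_mul _ ‖z‖]
  gcongr
  linarith [norm_add_le (I * μ t / 2 * U t) (-(I * p t / 2) * W t)]

theorem norm_remainder_coeff_le (h : DiracPerturbationBound a g μ p A K x₁) (θ : ℝ)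
    (ht : t ≤ x₁) :
    ‖-(I * deriv p t / 2) + a t * μ t ^ 2 / 2 - a t * p t ^ 2 / 2
        - p t * ((θ * a t / g t : ℝ) : ℂ)‖ ≤ a t * (K + K ^ 2 + (K * A) ^ 2 + |θ| * K) := by
  have ha := h.pos t
  have hg := h.primitive_pos t
  have hp' : ‖-(I * deriv p t / 2)‖ ≤ K * a t := by
    simp only [norm_neg, norm_mul, norm_div, norm_I, norm_real, Real.norm_eq_abs, norm_ofNat]
    linarith [h.abs_deriv_shift_le t ht, abs_nonneg (deriv p t)]
  have hsq : ∀ {y M : ℝ}, |y| ≤ M → ‖(a t * y ^ 2 / 2 : ℂ)‖ ≤ a t * M ^ 2 := fun {y M} hy => by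
    simp only [norm_mul, norm_div, norm_pow, norm_real, Real.norm_eq_abs, norm_ofNat,
      abs_of_pos ha]
    have := pow_le_pow_left₀ (abs_nonneg y) hy 2
    nlinarith [sq_nonneg |y|]
  have hpθ : ‖(p t * (θ * a t / g t : ℝ) : ℂ)‖ ≤ a t * (|θ| * K) := by
    simp only [norm_mul, norm_real, Real.norm_eq_abs, abs_div, abs_mul, abs_of_pos ha,
      abs_of_pos hg]
    calc |p t| * (|θ| * a t / g t) ≤ K * g t * (|θ| * a t / g t) := by
          gcongr; exact h.abs_shift_le t ht
      _ = a t * (|θ| * K) := by field_simp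
  refine (norm_sub_le_of_le (norm_sub_le_of_le (norm_add_le_of_le hp' (hsq (h.abs_mass_le t ht)))
    (hsq (h.abs_shift_le_const ht))) hpθ).trans_eq (by ring)

theorem norm_remainder_le (h : DiracPerturbationBound a g μ p A K x₁) (z : ℂ) (θ : ℝ)
    (ht : t ≤ x₁) (hU : ‖U t‖ ≤ T) (hW : ‖W t‖ ≤ T) :
    ‖diracRemainder a (fun t => θ * a t / g t) μ p z U W t‖ ≤
      a t * ((2 * K + K ^ 2 + (K * A) ^ 2 + |θ| * K) * T / ‖z‖) := by
  have hμ' : ‖I * deriv μ t / 2‖ ≤ K * a t := by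
    simp only [norm_mul, norm_div, norm_I, norm_real, Real.norm_eq_abs, norm_ofNat]
    linarith [h.abs_deriv_mass_le t ht, abs_nonneg (deriv μ t)]
  have hcoeff := h.norm_remainder_coeff_le θ ht
  rw [diracRemainder, norm_mul, norm_inv]
  calc _ ≤ ‖z‖⁻¹ * (K * a t * T + a t * (K + K ^ 2 + (K * A) ^ 2 + |θ| * K) * T) := by
        gcongr
        exact norm_add_le_of_le (norm_mul_le_of_le hμ' hU) (norm_mul_le_of_le hcoeff hW)
    _ = _ := by ring

theorem norm_massive_le (h : DiracPerturbationBound a g μ p A K x₁)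
    (hUW : IsMassiveDiracSolution a ℓ μ z U W) (hU : ∀ᶠ t in atBot, ‖U t‖ ≤ 2)
    (hW : ∀ᶠ t in atBot, ‖W t‖ ≤ 2) (ht : t ≤ x₁) :
    ‖U t‖ ≤ 4 * Real.exp ((1 + K ^ 2) * A) * Real.exp (|z.re| * g t) ∧
      ‖W t‖ ≤ 4 * Real.exp ((1 + K ^ 2) * A) * Real.exp (|z.re| * g t) := by
  have hsource : ∀ t ≤ x₁, ‖-(I * (a t * μ t)) * W t‖ ^ 2 + ‖I * (a t * μ t) * U t‖ ^ 2 ≤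
      a t ^ 2 * (K ^ 2 * (‖U t‖ ^ 2 + ‖W t‖ ^ 2)
        + 2 * 0 ^ 2 * Real.exp (2 * |z.re| * g t)) := fun t ht => by
    have hμ := pow_le_pow_left₀ (abs_nonneg _) (h.abs_mass_le t ht) 2
    rw [sq_abs] at hμ
    simp only [norm_mul, norm_neg, norm_I, norm_real, Real.norm_eq_abs, mul_pow, one_mul, sq_abs]
    linarith [mul_le_mul_of_nonneg_right hμ
      (by positivity : 0 ≤ a t ^ 2 * (‖U t‖ ^ 2 + ‖W t‖ ^ 2))]
  convert hUW.norm_le h.pos h.hasDerivAt (fun t => (h.primitive_pos t).le) h.primitive_le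
    (sq_nonneg K) le_rfl hsource zero_le_two hU hW ht using 3 <;> ring

theorem eventually_norm_add_corrector_sub_le (h : DiracPerturbationBound a g μ p A K x₁)
    (hz : z ≠ 0) (hU : ∀ᶠ t in atBot, ‖U t‖ ≤ T) (hW : ∀ᶠ t in atBot, ‖W t‖ ≤ T)
    (hUu : Tendsto (fun t => U t - u t) atBot (nhds 0)) :
    ∀ᶠ t in atBot, ‖(U + diracCorrector z μ p U W - u) t‖ ≤ (1 + K * (1 + A) * T) / ‖z‖ := by
  have hclose : ∀ᶠ t in atBot, ‖U t - u t‖ < 1 / ‖z‖ :=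
    (tendsto_zero_iff_norm_tendsto_zero.mp hUu).eventually_lt_const
      (one_div_pos.mpr (norm_pos_iff.mpr hz))
  filter_upwards [hclose, hU, hW, eventually_le_atBot x₁] with t hclose hUt hWt ht
  rw [Pi.sub_apply, Pi.add_apply, add_sub_right_comm, add_div]
  exact norm_add_le_of_le hclose.le (h.norm_corrector_le z ht hUt hWt)

theorem norm_normalForm_sub_le (h : DiracPerturbationBound a g μ p A K x₁) {θ : ℝ} (hz : z ≠ 0)
    {δ : ℝ} (hT : 0 ≤ T) (hδ : 0 ≤ δ)
    (hUW : IsMassiveDiracSolution a (a * p + fun t => θ * a t / g t) μ z U W)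
    (huw : IsFreeDiracSolution a (fun t => θ * a t / g t) z u w)
    (hUT : ∀ t ≤ x₁, ‖U t‖ ≤ T * Real.exp (|z.re| * g t))
    (hWT : ∀ t ≤ x₁, ‖W t‖ ≤ T * Real.exp (|z.re| * g t))
    (hU : ∀ᶠ t in atBot, ‖(U + diracCorrector z μ p U W - u) t‖ ≤ δ / ‖z‖)
    (hW : ∀ᶠ t in atBot, ‖(W + diracCorrector z (-μ) (-p) W U - w) t‖ ≤ δ / ‖z‖) (ht : t ≤ x₁) :
    let V := 2 * Real.exp A * (δ + (2 * K + K ^ 2 + (K * A) ^ 2 + |θ| * K) * T * (1 + A))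
    ‖(U + diracCorrector z μ p U W - u) t‖ ≤ V * Real.exp (|z.re| * g t) / ‖z‖ ∧
      ‖(W + diracCorrector z (-μ) (-p) W U - w) t‖ ≤ V * Real.exp (|z.re| * g t) / ‖z‖ := by
  intro V
  set r := (2 * K + K ^ 2 + (K * A) ^ 2 + |θ| * K) * T / ‖z‖ with hr
  have hK := h.bound_nonneg
  have hsource := (hUW.normalForm hz h.differentiable_mass h.differentiable_shift).sub huw
  have hρ₁ : ∀ t ≤ x₁, ‖diracRemainder a (fun t => θ * a t / g t) μ p z U W t‖ ≤
      a t * (r * Real.exp (|z.re| * g t)) := fun t ht =>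
    (h.norm_remainder_le z θ ht (hUT t ht) (hWT t ht)).trans_eq (by ring)
  have hρ₂ : ∀ t ≤ x₁, ‖diracRemainder a (-fun t => θ * a t / g t) (-μ) (-p) z W U t‖ ≤
      a t * (r * Real.exp (|z.re| * g t)) := fun t ht => by
    have hswap := h.neg_mass.neg_shift.norm_remainder_le z (-θ) ht (hWT t ht) (hUT t ht)
    have hneg : (-fun t => θ * a t / g t) = fun t => -θ * a t / g t := by
      ext t; simp only [Pi.neg_apply]; ring
    rw [hneg]
    refine hswap.trans_eq ?_
    rw [abs_neg]
    ring
  have hρ : ∀ t ≤ x₁, _ := fun t ht => (add_le_add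
    (pow_le_pow_left₀ (norm_nonneg _) (hρ₁ t ht) 2)
    (pow_le_pow_left₀ (norm_nonneg _) (hρ₂ t ht) 2)).trans_eq
      (show _ = a t ^ 2 * (0 * _ + 2 * r ^ 2 * Real.exp (2 * |z.re| * g t)) by
        rw [show 2 * |z.re| * g t = (2 : ℕ) * (|z.re| * g t) by push_cast; ring, Real.exp_nat_mul]
        ring)
  have hbound := hsource.norm_le (r := r) h.pos h.hasDerivAt (fun t => (h.primitive_pos t).le)
    h.primitive_le le_rfl (by positivity) (by simpa using hρ) (by positivity) hU hW ht
  have hV : 2 * Real.exp ((1 + 0) * A) * (δ / ‖z‖ + r * (1 + A)) * Real.exp (|z.re| * g t) =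
      V * Real.exp (|z.re| * g t) / ‖z‖ := by
    rw [add_zero, one_mul, hr]
    ring
  rwa [hV] at hbound

end DiracPerturbationBound

theorem exists_norm_massive_sub_free_le (θ A K : ℝ) :
    ∃ C : ℝ, ∀ {a g μ p : ℝ → ℝ} {x₁ : ℝ}, DiracPerturbationBound a g μ p A K x₁ →
      ∀ {z : ℂ}, z ≠ 0 → ∀ {U W u w : ℝ → ℂ},
      IsMassiveDiracSolution a (a * p + fun t => θ * a t / g t) μ z U W →
      IsFreeDiracSolution a (fun t => θ * a t / g t) z u w →
      (∀ᶠ t in atBot, ‖U t‖ ≤ 2) → (∀ᶠ t in atBot, ‖W t‖ ≤ 2) →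
      Tendsto (fun t => U t - u t) atBot (nhds 0) → Tendsto (fun t => W t - w t) atBot (nhds 0) →
      ∀ t ≤ x₁, ‖U t - u t‖ ≤ C * Real.exp (|z.re| * g t) / ‖z‖ ∧
        ‖W t - w t‖ ≤ C * Real.exp (|z.re| * g t) / ‖z‖ := by
  set T := 4 * Real.exp ((1 + K ^ 2) * A)
  set δ := 1 + K * (1 + A) * 2
  refine ⟨2 * Real.exp A * (δ + (2 * K + K ^ 2 + (K * A) ^ 2 + |θ| * K) * T * (1 + A))
    + K * (1 + A) * T, fun {a g μ p x₁} h {z} hz {U W u w} hUW huw hU hW hUu hWw t ht => ?_⟩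
  have hK := h.bound_nonneg
  have hA := h.primitive_bound_pos
  have hgrowth : ∀ t ≤ x₁, _ := fun t ht => h.norm_massive_le hUW hU hW ht
  obtain ⟨hd, he⟩ := h.norm_normalForm_sub_le hz (by positivity) (by positivity) hUW huw
    (fun t ht => (hgrowth t ht).1) (fun t ht => (hgrowth t ht).2)
    (h.eventually_norm_add_corrector_sub_le hz hU hW hUu)
    (h.neg_mass.neg_shift.eventually_norm_add_corrector_sub_le hz hW hU hWw) ht
  have hcU := h.norm_corrector_le z ht (hgrowth t ht).1 (hgrowth t ht).2
  have hcW := h.neg_mass.neg_shift.norm_corrector_le z ht (hgrowth t ht).2 (hgrowth t ht).1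
  have hsplit : ∀ x y v : ℂ, x - v = (x + y - v) - y := fun x y v => by ring
  constructor
  · rw [hsplit _ (diracCorrector z μ p U W t)]
    exact (norm_sub_le_of_le hd hcU).trans_eq (by ring)
  · rw [hsplit _ (diracCorrector z (-μ) (-p) W U t)]
    exact (norm_sub_le_of_le he hcW).trans_eq (by ring)

end DiracSystem

section RegularizedConfluent

open Complex

/-- The regularized confluent hypergeometric limit function `∑ yᵏ / (Γ(b + k) k!)`, an entire
function of `y` for every `b`, as `(Gamma s)⁻¹ = 0` at the poles of `Γ`. It is a Bessel function of
order `b - 1` stripped of its branching factor. -/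
noncomputable def reg0F1 (b y : ℂ) : ℂ := ∑' k : ℕ, (Gamma (b + k))⁻¹ / k.factorial * y ^ k

theorem inv_Gamma_eq_mul (s : ℂ) : (Gamma s)⁻¹ = s * (Gamma (s + 1))⁻¹ := by
  simpa only [one_div] using one_div_Gamma_eq_self_mul_one_div_Gamma_add_one s

theorem exists_norm_inv_Gamma_add_natCast_le (b : ℂ) :
    ∃ M, ∀ k : ℕ, ‖(Gamma (b + k))⁻¹‖ ≤ M := by
  obtain ⟨n, hn⟩ := exists_nat_ge (‖b‖ + 1)
  have hanti : ∀ k ≥ n, ‖(Gamma (b + k))⁻¹‖ ≤ ‖(Gamma (b + n))⁻¹‖ := fun k hk => by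
    induction k, hk using Nat.le_induction with
    | base => rfl
    | succ k hk ih =>
      have hge : 1 ≤ ‖b + k‖ := by
        have := norm_sub_le (b + k) b
        rw [add_sub_cancel_left, norm_natCast] at this
        linarith [(Nat.cast_le (α := ℝ)).mpr hk]
      rw [inv_Gamma_eq_mul (b + k), norm_mul] at ih
      push_cast
      rw [← add_assoc]
      exact (le_mul_of_one_le_left (norm_nonneg _) hge).trans ih
  obtain ⟨M, hM⟩ := (isBoundedUnder_of_eventually_le (f := atTop)
    (eventually_atTop.mpr ⟨n, hanti⟩)).bddAbove_range
  exact ⟨M, fun k => hM ⟨k, rfl⟩⟩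

theorem summable_reg0F1 (b y : ℂ) :
    Summable fun k : ℕ => (Gamma (b + k))⁻¹ / k.factorial * y ^ k := by
  obtain ⟨M, hM⟩ := exists_norm_inv_Gamma_add_natCast_le b
  refine .of_norm_bounded ((Real.summable_pow_div_factorial ‖y‖).mul_left M) fun k => ?_
  rw [norm_mul, norm_div, norm_natCast, norm_pow, div_mul_eq_mul_div, mul_div_assoc]
  gcongr
  exact hM k

theorem reg0F1_coeff_succ (b : ℂ) (k : ℕ) :
    (Gamma (b + (k + 1 : ℕ)))⁻¹ / (k + 1).factorial * (k + 1) =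
      (Gamma (b + 1 + k))⁻¹ / k.factorial := by
  rw [Nat.factorial_succ, show b + 1 + k = b + (k + 1 : ℕ) by push_cast; ring]
  push_cast
  have := Nat.cast_add_one_ne_zero (R := ℂ) k
  field_simp

theorem reg0F1_eq_zero_add (b y : ℂ) :
    reg0F1 b y = (Gamma b)⁻¹
      + ∑' k : ℕ, (Gamma (b + (k + 1 : ℕ)))⁻¹ / (k + 1).factorial * y ^ (k + 1) := by
  rw [reg0F1, (summable_reg0F1 b y).tsum_eq_zero_add]
  simp

theorem hasDerivAt_reg0F1 (b y : ℂ) : HasDerivAt (reg0F1 b) (reg0F1 (b + 1) y) y := by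
  obtain ⟨M, hM⟩ := exists_norm_inv_Gamma_add_natCast_le (b + 1)
  have hderiv : HasDerivAt (fun y : ℂ =>
      ∑' k : ℕ, (Gamma (b + (k + 1 : ℕ)))⁻¹ / (k + 1).factorial * y ^ (k + 1))
      (reg0F1 (b + 1) y) y := by
    refine hasDerivAt_tsum_of_isPreconnected (y₀ := y)
      (g' := fun (k : ℕ) w => (Gamma (b + 1 + k))⁻¹ / k.factorial * w ^ k)
      ((Real.summable_pow_div_factorial (‖y‖ + 1)).mul_left M) Metric.isOpen_ball
      (convex_ball (0 : ℂ) (‖y‖ + 1)).isPreconnected (fun k w _ => ?_) (fun k w hw => ?_)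
      (mem_ball_zero_iff.mpr (lt_add_one ‖y‖)) ?_ (mem_ball_zero_iff.mpr (lt_add_one ‖y‖))
    · refine ((hasDerivAt_pow (k + 1) w).const_mul _).congr_deriv ?_
      rw [← reg0F1_coeff_succ, Nat.add_sub_cancel, ← mul_assoc]
      push_cast
      rfl
    · rw [mem_ball_zero_iff] at hw
      rw [norm_mul, norm_div, norm_natCast, norm_pow, div_mul_eq_mul_div, mul_div_assoc]
      gcongr
      exacts [(norm_nonneg _).trans (hM 0), hM k]
    · exact (summable_nat_add_iff 1).mpr (summable_reg0F1 b y)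
  exact (hderiv.const_add (Gamma b)⁻¹).congr_of_eventuallyEq
    (.of_forall (reg0F1_eq_zero_add b))

theorem reg0F1_contiguous (b y : ℂ) :
    b * reg0F1 (b + 1) y + y * reg0F1 (b + 2) y = reg0F1 b y := by
  have hshift : ∀ k : ℕ, (Gamma (b + (k + 1 : ℕ)))⁻¹ / (k + 1).factorial * y ^ (k + 1) =
      b * ((Gamma (b + 1 + (k + 1 : ℕ)))⁻¹ / (k + 1).factorial * y ^ (k + 1))
        + y * ((Gamma (b + 2 + k))⁻¹ / k.factorial * y ^ k) := fun k => by
    have hfac : (k.factorial : ℂ)⁻¹ = (k + 1) / (k + 1).factorial := by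
      rw [Nat.factorial_succ]
      push_cast
      have := Nat.cast_add_one_ne_zero (R := ℂ) k
      field_simp
    rw [inv_Gamma_eq_mul, show b + 2 + k = b + (k + 1 : ℕ) + 1 by push_cast; ring,
      show b + 1 + (k + 1 : ℕ) = b + (k + 1 : ℕ) + 1 by ring, div_eq_mul_inv _ (k.factorial : ℂ),
      hfac]
    push_cast
    ring
  rw [reg0F1_eq_zero_add b, reg0F1_eq_zero_add (b + 1), tsum_congr hshift, Summable.tsum_add,
    tsum_mul_left, tsum_mul_left, inv_Gamma_eq_mul b]
  · simp only [reg0F1]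
    ring
  · exact ((summable_nat_add_iff 1).mpr (summable_reg0F1 (b + 1) y)).mul_left b
  · exact (summable_reg0F1 (b + 2) y).mul_left y

theorem reg0F1_zero_right (b : ℂ) : reg0F1 b 0 = (Gamma b)⁻¹ := by
  simp [reg0F1_eq_zero_add]

variable {X : ℝ}

theorem exp_add_natCast_mul_log (w : ℂ) (n : ℕ) (hX : 0 < X) :
    exp ((w + n) * (Real.log X : ℝ)) = exp (w * (Real.log X : ℝ)) * (X : ℂ) ^ n := by
  rw [add_mul, exp_add, exp_nat_mul, ← ofReal_exp, Real.exp_log hX]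

theorem Bfun_eq_reg0F1 (ν z : ℂ) (hX : 0 < X) :
    Bfun ν z X = Gamma (1 - ν) * (exp ((1 / 2 - ν) * (Real.log X : ℝ))
      * reg0F1 (1 - ν) ((X * z / 2) ^ 2)) := by
  rw [Bfun, reg0F1, ← tsum_mul_left, ← tsum_mul_left, ← tsum_mul_left]
  refine tsum_congr fun k => ?_
  rw [show 1 / 2 - ν + 2 * (k : ℂ) = 1 / 2 - ν + (2 * k : ℕ) by push_cast; ring,
    exp_add_natCast_mul_log _ _ hX, show (k : ℂ) + 1 - ν = 1 - ν + k by ring, ← pow_mul]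
  ring

theorem Dfun_eq_reg0F1 (ν z : ℂ) (hX : 0 < X) :
    Dfun ν z X = Gamma (1 - ν) * (exp ((1 / 2 - ν) * (Real.log X : ℝ))
      * (X * z / 2 * reg0F1 (1 - ν + 1) ((X * z / 2) ^ 2))) := by
  rw [Dfun, reg0F1, ← tsum_mul_left, ← tsum_mul_left, ← tsum_mul_left, ← tsum_mul_left]
  refine tsum_congr fun k => ?_
  rw [show 3 / 2 - ν + 2 * (k : ℂ) = 1 / 2 - ν + (2 * k + 1 : ℕ) by push_cast; ring,
    exp_add_natCast_mul_log _ _ hX, show (k : ℂ) + 2 - ν = 1 - ν + 1 + k by ring, ← pow_mul]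
  ring

theorem hasDerivAt_exp_mul_log (w : ℂ) (hX : 0 < X) :
    HasDerivAt (fun X : ℝ => exp (w * (Real.log X : ℝ)))
      (w / X * exp (w * (Real.log X : ℝ))) X := by
  refine ((Real.hasDerivAt_log hX.ne').ofReal_comp.const_mul w).cexp.congr_deriv ?_
  push_cast
  ring

theorem hasDerivAt_ofReal_mul_div_two (z : ℂ) (X : ℝ) :
    HasDerivAt (fun X : ℝ => X * z / 2) (z / 2) X := by
  simpa using ((hasDerivAt_id X).ofReal_comp.mul_const z).div_const 2

theorem hasDerivAt_reg0F1_sq (b z : ℂ) (X : ℝ) :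
    HasDerivAt (fun X : ℝ => reg0F1 b ((X * z / 2) ^ 2))
      (reg0F1 (b + 1) ((X * z / 2) ^ 2) * (X * z * (z / 2))) X := by
  have hsq : HasDerivAt (fun X : ℝ => (X * z / 2) ^ 2) (X * z * (z / 2)) X := by
    refine ((hasDerivAt_ofReal_mul_div_two z X).pow 2).congr_deriv ?_
    push_cast
    ring
  exact (hasDerivAt_reg0F1 b _).comp X hsq

theorem hasDerivAt_Bfun (ν z : ℂ) (hX : 0 < X) :
    HasDerivAt (Bfun ν z) ((1 / 2 - ν) / X * Bfun ν z X + z * Dfun ν z X) X := by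
  have hmul := ((hasDerivAt_exp_mul_log (1 / 2 - ν) hX).mul
    (hasDerivAt_reg0F1_sq (1 - ν) z X)).const_mul (Gamma (1 - ν))
  refine (hmul.congr_deriv ?_).congr_of_eventuallyEq ?_
  · rw [Bfun_eq_reg0F1 ν z hX, Dfun_eq_reg0F1 ν z hX]
    ring
  · filter_upwards [lt_mem_nhds hX] with Y hY using Bfun_eq_reg0F1 ν z hY

theorem hasDerivAt_Dfun (ν z : ℂ) (hX : 0 < X) :
    HasDerivAt (Dfun ν z) (-((1 / 2 - ν) / X) * Dfun ν z X + z * Bfun ν z X) X := by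
  have hmul := ((hasDerivAt_exp_mul_log (1 / 2 - ν) hX).mul ((hasDerivAt_ofReal_mul_div_two z X).mul
    (hasDerivAt_reg0F1_sq (1 - ν + 1) z X))).const_mul (Gamma (1 - ν))
  refine (hmul.congr_deriv ?_).congr_of_eventuallyEq ?_
  · have hX' : (X : ℂ) ≠ 0 := ofReal_ne_zero.mpr hX.ne'
    rw [Bfun_eq_reg0F1 ν z hX, Dfun_eq_reg0F1 ν z hX, ← reg0F1_contiguous (1 - ν),
      add_assoc (1 - ν) 1 1, one_add_one_eq_two]
    simp only [Pi.mul_apply]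
    field_simp
    ring
  · filter_upwards [lt_mem_nhds hX] with Y hY using Dfun_eq_reg0F1 ν z hY

theorem continuous_reg0F1_sq (b z : ℂ) : Continuous fun X : ℝ => reg0F1 b ((X * z / 2) ^ 2) :=
  continuous_iff_continuousAt.mpr fun X => (hasDerivAt_reg0F1_sq b z X).continuousAt

variable {ν : ℂ}

theorem norm_exp_half_sub_mul_log (hν : ν.re = 1 / 2) (X : ℝ) :
    ‖exp ((1 / 2 - ν) * (Real.log X : ℝ))‖ = 1 := by
  simp [norm_exp, hν]

theorem tendsto_Bfun_sub_exp (z : ℂ) (hν : ν.re = 1 / 2) :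
    Tendsto (fun X : ℝ => Bfun ν z X - exp ((1 / 2 - ν) * (Real.log X : ℝ)))
      (nhdsWithin 0 (Set.Ioi 0)) (nhds 0) := by
  have hΓ : Gamma (1 - ν) ≠ 0 := Gamma_ne_zero_of_re_pos (by norm_num [hν])
  have hlim : Tendsto (fun X : ℝ => Gamma (1 - ν) * reg0F1 (1 - ν) ((X * z / 2) ^ 2) - 1)
      (nhdsWithin 0 (Set.Ioi 0)) (nhds 0) := by
    have hreg := continuous_reg0F1_sq (1 - ν) z
    have hcont : Continuous fun X : ℝ =>
        Gamma (1 - ν) * reg0F1 (1 - ν) ((X * z / 2) ^ 2) - 1 := by fun_prop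
    simpa [reg0F1_zero_right, hΓ] using (hcont.tendsto 0).mono_left nhdsWithin_le_nhds
  refine squeeze_zero_norm' ?_ (tendsto_zero_iff_norm_tendsto_zero.mp hlim)
  filter_upwards [self_mem_nhdsWithin] with X hX
  rw [Bfun_eq_reg0F1 ν z hX, mul_left_comm, ← mul_sub_one, norm_mul,
    norm_exp_half_sub_mul_log hν, one_mul]

theorem tendsto_Dfun (z : ℂ) (hν : ν.re = 1 / 2) :
    Tendsto (Dfun ν z) (nhdsWithin 0 (Set.Ioi 0)) (nhds 0) := by
  have hlim : Tendsto (fun X : ℝ => Gamma (1 - ν) *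
      (X * z / 2 * reg0F1 (1 - ν + 1) ((X * z / 2) ^ 2))) (nhdsWithin 0 (Set.Ioi 0)) (nhds 0) := by
    have hreg := continuous_reg0F1_sq (1 - ν + 1) z
    have hcont : Continuous fun X : ℝ => Gamma (1 - ν) *
        (X * z / 2 * reg0F1 (1 - ν + 1) ((X * z / 2) ^ 2)) := by fun_prop
    simpa using (hcont.tendsto 0).mono_left nhdsWithin_le_nhds
  refine squeeze_zero_norm' ?_ (tendsto_zero_iff_norm_tendsto_zero.mp hlim)
  filter_upwards [self_mem_nhdsWithin] with X hX
  rw [Dfun_eq_reg0F1 ν z hX, mul_left_comm, norm_mul, norm_exp_half_sub_mul_log hν, one_mul]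

end RegularizedConfluent

section HorizonFlow

/-- `r` follows the flow `r' = F(r)` out of a nondegenerate zero `r₀ > 0` of `F`, the horizon, whose
surface gravity `F'(r₀) / 2` is `κ > 0`. The time is the Regge–Wheeler coordinate of `F`. -/
structure IsHorizonFlow (F r : ℝ → ℝ) (r₀ κ : ℝ) : Prop where
  contDiffOn : ContDiffOn ℝ 2 F (Set.Ioi 0)
  horizon_pos : 0 < r₀
  apply_horizon : F r₀ = 0
  deriv_horizon : deriv F r₀ = 2 * κ
  gravity_pos : 0 < κ
  horizon_lt : ∀ t, r₀ < r t
  apply_pos : ∀ t, 0 < F (r t)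
  hasDerivAt : ∀ t, HasDerivAt r (F (r t)) t
  tendsto : Tendsto r atBot (nhds r₀)

/-- The potential `a = √F(r) / r` that multiplies the angular momentum in the Dirac equation. -/
noncomputable def angularPotential (F r : ℝ → ℝ) (t : ℝ) : ℝ := √(F (r t)) / r t

/-- The logarithmic derivative of the angular potential as a function of the radius; at a horizon it
is the surface gravity. -/
noncomputable def potentialRate (F : ℝ → ℝ) (s : ℝ) : ℝ := deriv F s / 2 - F s / s

namespace IsHorizonFlow

variable {F r g : ℝ → ℝ} {r₀ κ : ℝ}

theorem pos (hr : IsHorizonFlow F r r₀ κ) (t : ℝ) : 0 < r t :=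
  hr.horizon_pos.trans (hr.horizon_lt t)

theorem continuous (hr : IsHorizonFlow F r r₀ κ) : Continuous r :=
  continuous_iff_continuousAt.mpr fun t => (hr.hasDerivAt t).continuousAt

theorem hasDerivAt_apply (hr : IsHorizonFlow F r r₀ κ) {s : ℝ} (hs : 0 < s) :
    HasDerivAt F (deriv F s) s :=
  ((hr.contDiffOn.contDiffAt (Ioi_mem_nhds hs)).differentiableAt two_ne_zero).hasDerivAt

theorem contDiffOn_deriv (hr : IsHorizonFlow F r r₀ κ) : ContDiffOn ℝ 1 (deriv F) (Set.Ioi 0) :=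
  hr.contDiffOn.deriv_of_isOpen isOpen_Ioi (by norm_num)

theorem differentiableAt_potentialRate (hr : IsHorizonFlow F r r₀ κ) {s : ℝ} (hs : 0 < s) :
    DifferentiableAt ℝ (potentialRate F) s :=
  ((hr.contDiffOn_deriv.contDiffAt (Ioi_mem_nhds hs)).differentiableAt one_ne_zero).div_const 2
    |>.sub ((hr.hasDerivAt_apply hs).differentiableAt.div differentiableAt_id hs.ne')

theorem potentialRate_horizon (hr : IsHorizonFlow F r r₀ κ) : potentialRate F r₀ = κ := by
  rw [potentialRate, hr.deriv_horizon, hr.apply_horizon]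
  ring

theorem potential_pos (hr : IsHorizonFlow F r r₀ κ) (t : ℝ) : 0 < angularPotential F r t :=
  div_pos (Real.sqrt_pos.mpr (hr.apply_pos t)) (hr.pos t)

theorem apply_eq (hr : IsHorizonFlow F r r₀ κ) (t : ℝ) :
    F (r t) = angularPotential F r t ^ 2 * r t ^ 2 := by
  rw [angularPotential, div_pow, Real.sq_sqrt (hr.apply_pos t).le,
    div_mul_cancel₀ _ (pow_ne_zero 2 (hr.pos t).ne')]

theorem hasDerivAt_potential (hr : IsHorizonFlow F r r₀ κ) (t : ℝ) :
    HasDerivAt (angularPotential F r) (angularPotential F r t * potentialRate F (r t)) t := by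
  have hsqrt := (((hr.hasDerivAt_apply (hr.pos t)).comp t (hr.hasDerivAt t)).sqrt
    (hr.apply_pos t).ne').div (hr.hasDerivAt t) (hr.pos t).ne'
  refine hsqrt.congr_deriv ?_
  have hroot : √(F (r t)) ≠ 0 := (Real.sqrt_pos.mpr (hr.apply_pos t)).ne'
  have hr0 := (hr.pos t).ne'
  simp only [Function.comp_apply, angularPotential, potentialRate]
  field_simp
  rw [Real.sq_sqrt (hr.apply_pos t).le]
  ring

theorem continuous_potential (hr : IsHorizonFlow F r r₀ κ) : Continuous (angularPotential F r) :=
  continuous_iff_continuousAt.mpr fun t => (hr.hasDerivAt_potential t).continuousAt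

theorem tendsto_potential (hr : IsHorizonFlow F r r₀ κ) :
    Tendsto (angularPotential F r) atBot (nhds 0) := by
  have hF : Tendsto (fun t => F (r t)) atBot (nhds (F r₀)) :=
    (hr.hasDerivAt_apply hr.horizon_pos).continuousAt.tendsto.comp hr.tendsto
  have hlim := hF.sqrt.div hr.tendsto hr.horizon_pos.ne'
  rwa [hr.apply_horizon, Real.sqrt_zero, zero_div] at hlim

theorem isBigO_radius_sub (hr : IsHorizonFlow F r r₀ κ) :
    (fun t => r t - r₀) =O[atBot] fun t => angularPotential F r t ^ 2 := by
  have hF : (fun t => r t - r₀) =O[atBot] fun t => F (r t) := by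
    have hderiv := hr.hasDerivAt_apply hr.horizon_pos
    have hne : deriv F r₀ ≠ 0 := by
      rw [hr.deriv_horizon]
      exact mul_ne_zero two_ne_zero hr.gravity_pos.ne'
    simpa [Function.comp_def, hr.apply_horizon] using
      (HasDerivAtFilter.isTheta_sub hderiv hne).isBigO_symm.comp_tendsto
        (hr.tendsto.prodMk (tendsto_pure.mpr (.of_forall fun _ : ℝ => rfl)))
  refine hF.trans ?_
  simpa only [hr.apply_eq, mul_one] using
    (isBigO_refl _ _).mul ((hr.tendsto.pow 2).isBigO_one ℝ)

theorem isBigO_comp_sub (hr : IsHorizonFlow F r r₀ κ) {f : ℝ → ℝ} (hf : DifferentiableAt ℝ f r₀) :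
    (fun t => f (r t) - f r₀) =O[atBot] fun t => angularPotential F r t ^ 2 :=
  (hf.hasDerivAt.isBigO_sub.comp_tendsto hr.tendsto).trans hr.isBigO_radius_sub

theorem potentialRate_isBigO_one (hr : IsHorizonFlow F r r₀ κ) :
    (fun t => potentialRate F (r t)) =O[atBot] fun _ => (1 : ℝ) :=
  ((hr.differentiableAt_potentialRate hr.horizon_pos).continuousAt.tendsto.comp
    hr.tendsto).isBigO_one ℝ

theorem apply_isBigO (hr : IsHorizonFlow F r r₀ κ) :
    (fun t => F (r t)) =O[atBot] angularPotential F r := by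
  have hone : (fun t => angularPotential F r t * r t ^ 2) =O[atBot] fun _ => (1 : ℝ) :=
    (hr.tendsto_potential.mul (hr.tendsto.pow 2)).isBigO_one ℝ
  refine ((isBigO_refl (angularPotential F r) atBot).mul hone).congr (fun t => ?_)
    fun t => mul_one _
  rw [hr.apply_eq]
  ring

theorem exists_abs_mul_radius_le (hr : IsHorizonFlow F r r₀ κ) (m x₁ : ℝ) :
    ∃ K, ∀ t ≤ x₁, |m * r t| ≤ K ∧
      |deriv (fun t => m * r t) t| ≤ K * angularPotential F r t := by
  have hFr : Continuous fun t => F (r t) := continuous_iff_continuousAt.mpr fun t =>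
    (hr.hasDerivAt_apply (hr.pos t)).continuousAt.comp hr.continuous.continuousAt
  obtain ⟨K₁, hK₁⟩ := exists_abs_le_mul_of_isBigO_atBot (hr.continuous.const_mul m)
    continuous_const (fun _ => one_pos) ((hr.tendsto.const_mul m).isBigO_one ℝ) x₁
  obtain ⟨K₂, hK₂⟩ := exists_abs_le_mul_of_isBigO_atBot (hFr.const_mul m) hr.continuous_potential
    hr.potential_pos (hr.apply_isBigO.const_mul_left m) x₁
  refine ⟨max K₁ K₂, fun t ht => ⟨(hK₁ t ht).trans ?_,
    ((hr.hasDerivAt t).const_mul m).deriv ▸ (hK₂ t ht).trans ?_⟩⟩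
  · exact (mul_one K₁).trans_le (le_max_left _ _)
  · exact mul_le_mul_of_nonneg_right (le_max_right _ _) (hr.potential_pos t).le

section Primitive

variable (hr : IsHorizonFlow F r r₀ κ) (hg : ∀ t, HasDerivAt g (angularPotential F r t) t)
  (hg0 : Tendsto g atBot (nhds 0))
include hr hg hg0

theorem potential_isBigO : angularPotential F r =O[atBot] g := by
  refine isBigO_atBot_of_deriv hr.hasDerivAt_potential hg (fun t => (hr.potential_pos t).le) ?_
    hr.tendsto_potential hg0
  simpa only [mul_one] using
    (isBigO_refl (angularPotential F r) atBot).mul hr.potentialRate_isBigO_one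

theorem comp_sub_isBigO {f : ℝ → ℝ} (hf : DifferentiableAt ℝ f r₀) :
    (fun t => f (r t) - f r₀) =O[atBot] fun t => g t ^ 2 :=
  (hr.isBigO_comp_sub hf).trans ((hr.potential_isBigO hg hg0).pow 2)

theorem const_div_sub_isBigO (e : ℝ) :
    (fun t => e / r t - e / r₀) =O[atBot] fun t => g t ^ 2 :=
  hr.comp_sub_isBigO hg hg0 (f := fun s => e / s)
    (by fun_prop (disch := exact hr.horizon_pos.ne'))

theorem potentialRate_sub_isBigO :
    (fun t => potentialRate F (r t) - κ) =O[atBot] fun t => g t ^ 2 := by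
  simpa only [hr.potentialRate_horizon] using
    hr.comp_sub_isBigO hg hg0 (hr.differentiableAt_potentialRate hr.horizon_pos)

theorem potential_sub_isBigO :
    (fun t => angularPotential F r t - κ * g t) =O[atBot] fun t => g t ^ 3 := by
  have hcube : ∀ t, HasDerivAt (fun t => g t ^ 3) (3 * (g t ^ 2 * angularPotential F r t)) t :=
    fun t => ((hg t).fun_pow 3).congr_deriv (by push_cast; ring)
  refine isBigO_atBot_of_deriv
    (fun t => (hr.hasDerivAt_potential t).fun_sub ((hg t).const_mul κ)) hcube (fun t => ?_) ?_ ?_ ?_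
  · have := hr.potential_pos t
    positivity
  · refine .trans ?_ (isBigO_self_const_mul three_ne_zero _ _)
    exact ((hr.potentialRate_sub_isBigO hg hg0).mul
      (isBigO_refl (angularPotential F r) atBot)).congr_left fun t => by ring
  · simpa using hr.tendsto_potential.sub (hg0.const_mul κ)
  · simpa using hg0.pow 3

theorem potential_isEquivalent : angularPotential F r ~[atBot] fun t => κ * g t := by
  have hsq : (fun t => g t ^ 2) =o[atBot] fun _ => (1 : ℝ) :=
    (isLittleO_one_iff ℝ).mpr (by simpa using hg0.pow 2)
  have hcube : (fun t => g t ^ 3) =o[atBot] g :=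
    (hsq.mul_isBigO (isBigO_refl g atBot)).congr (fun t => by ring) fun t => one_mul (g t)
  exact ((hr.potential_sub_isBigO hg hg0).trans_isLittleO hcube).trans_isBigO
    (isBigO_self_const_mul hr.gravity_pos.ne' _ _)

theorem primitive_isBigO : g =O[atBot] angularPotential F r :=
  (isBigO_self_const_mul hr.gravity_pos.ne' g atBot).trans
    (hr.potential_isEquivalent hg hg0).isBigO_symm

theorem tendsto_log_primitive_sub {a₀ : ℝ} (hgpos : ∀ t, 0 < g t) (ha₀ : 0 < a₀)
    (ha : angularPotential F r ~[atBot] fun t => a₀ * Real.exp (κ * t)) :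
    Tendsto (fun t => Real.log (g t) - κ * t) atBot (nhds (Real.log (a₀ / κ))) := by
  have hequiv : (fun t => κ * g t) ~[atBot] fun t => a₀ * Real.exp (κ * t) :=
    (hr.potential_isEquivalent hg hg0).symm.trans ha
  have hratio : Tendsto (fun t => g t / Real.exp (κ * t)) atBot (nhds (a₀ / κ)) := by
    have hone := (isEquivalent_iff_tendsto_one (.of_forall fun t => by positivity)).mp hequiv
    refine (mul_one (a₀ / κ) ▸ hone.const_mul (a₀ / κ)).congr fun t => ?_
    have := hr.gravity_pos.ne'
    simp only [Pi.div_apply]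
    field_simp
  refine (hratio.log (div_pos ha₀ hr.gravity_pos).ne').congr fun t => ?_
  rw [Real.log_div (hgpos t).ne' (Real.exp_ne_zero _), Real.log_exp]

theorem div_isBigO_primitive {f : ℝ → ℝ} (n : ℕ) (hgpos : ∀ t, 0 < g t)
    (hf : f =O[atBot] fun t => g t ^ (n + 2)) :
    (fun t => f t / (angularPotential F r t * g t ^ n)) =O[atBot] g := by
  have hprod : f =O[atBot] fun t => angularPotential F r t * g t ^ n * g t := by
    refine hf.trans (((hr.primitive_isBigO hg hg0).mul
      (isBigO_refl (fun t => g t ^ (n + 1)) atBot)).congr (fun t => by ring) fun t => by ring)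
  refine (hprod.mul (isBigO_refl (fun t => (angularPotential F r t * g t ^ n)⁻¹) atBot)).congr
    (fun t => (div_eq_mul_inv _ _).symm) fun t => ?_
  have := (hr.potential_pos t).ne'
  have := (hgpos t).ne'
  field_simp

end Primitive

end IsHorizonFlow

/-- The regular part `(λ - e / r) / a - θ / g` of the reduced energy: with `a` the angular potential
and `g` a primitive of it, `λ - e / r = a * diracShift + θ * a / g`. -/
noncomputable def diracShift (F r g : ℝ → ℝ) (e lam θ t : ℝ) : ℝ :=
  (lam - e / r t) / angularPotential F r t - θ / g t

/-- The derivative of `diracShift`. -/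
noncomputable def diracShiftDeriv (F r g : ℝ → ℝ) (e lam θ t : ℝ) : ℝ :=
  e * angularPotential F r t - (lam - e / r t) * potentialRate F (r t) / angularPotential F r t
    + θ * angularPotential F r t / g t ^ 2

namespace IsHorizonFlow

variable {F r g : ℝ → ℝ} {r₀ κ e lam θ : ℝ} (hr : IsHorizonFlow F r r₀ κ)
  (hg : ∀ t, HasDerivAt g (angularPotential F r t) t) (hgpos : ∀ t, 0 < g t)
include hr hg hgpos

theorem hasDerivAt_diracShift (t : ℝ) :
    HasDerivAt (diracShift F r g e lam θ) (diracShiftDeriv F r g e lam θ t) t := by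
  have ha := (hr.potential_pos t).ne'
  have hg0 := (hgpos t).ne'
  have hr0 := (hr.pos t).ne'
  have hquot := (((((hasDerivAt_const t e).fun_div (hr.hasDerivAt t) hr0).const_sub lam).fun_div
    (hr.hasDerivAt_potential t) ha)).fun_sub ((hasDerivAt_const t θ).fun_div (hg t) hg0)
  refine hquot.congr_deriv ?_
  rw [hr.apply_eq, diracShiftDeriv]
  field_simp
  ring

theorem continuous_diracShiftDeriv : Continuous (diracShiftDeriv F r g e lam θ) := by
  have hrc := hr.continuous
  have hac := hr.continuous_potential
  have hgc : Continuous g := continuous_iff_continuousAt.mpr fun t => (hg t).continuousAt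
  have hkc : Continuous fun t => potentialRate F (r t) := continuous_iff_continuousAt.mpr fun t =>
    (hr.differentiableAt_potentialRate (hr.pos t)).continuousAt.comp hrc.continuousAt
  unfold diracShiftDeriv
  have ha := fun t => (hr.potential_pos t).ne'
  have hg0 := fun t => pow_ne_zero 2 (hgpos t).ne'
  have hr0 := fun t => (hr.pos t).ne'
  fun_prop (disch := assumption)

variable (hg0 : Tendsto g atBot (nhds 0)) (hθ : lam - e / r₀ = κ * θ)
include hg0 hθ

theorem diracShift_isBigO : diracShift F r g e lam θ =O[atBot] g := by
  have hc := hr.const_div_sub_isBigO hg hg0 e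
  have hnum := ((hr.potential_sub_isBigO hg hg0).const_mul_left (-θ)).sub
    ((hc.mul (isBigO_refl g atBot)).congr_right fun t => (pow_succ (g t) 2).symm)
  refine (hr.div_isBigO_primitive hg hg0 1 hgpos hnum).congr_left fun t => ?_
  have := (hr.potential_pos t).ne'
  have := (hgpos t).ne'
  rw [diracShift, show lam = κ * θ + e / r₀ by linarith]
  field_simp
  ring

theorem diracShiftDeriv_isBigO :
    diracShiftDeriv F r g e lam θ =O[atBot] angularPotential F r := by
  have hc := hr.const_div_sub_isBigO hg hg0 e
  have hsum : (fun t => angularPotential F r t + κ * g t) =O[atBot] g :=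
    (hr.potential_isBigO hg hg0).add ((isBigO_refl g atBot).const_mul_left κ)
  have hsq := isBigO_refl (fun t => g t ^ 2) atBot
  have hnum := ((((hr.potential_sub_isBigO hg hg0).mul hsum).const_mul_left θ).congr_right
      fun t => (pow_succ (g t) 3).symm).sub
    ((((hr.potentialRate_sub_isBigO hg hg0).mul hsq).const_mul_left (κ * θ)).congr_right
      fun t => (pow_add (g t) 2 2).symm) |>.add
    (((hc.mul hr.potentialRate_isBigO_one).mul hsq).congr_right fun t => by rw [mul_one, ← pow_add])
  have hquot := (hr.div_isBigO_primitive hg hg0 2 hgpos hnum).trans (hr.primitive_isBigO hg hg0)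
  refine (((isBigO_refl (angularPotential F r) atBot).const_mul_left e).add hquot).congr_left
    fun t => ?_
  have := (hr.potential_pos t).ne'
  have := (hgpos t).ne'
  rw [diracShiftDeriv, show lam = κ * θ + e / r₀ by linarith]
  field_simp
  ring

theorem exists_abs_diracShift_le (x₁ : ℝ) : ∃ K, ∀ t ≤ x₁,
    |diracShift F r g e lam θ t| ≤ K * g t ∧
      |deriv (diracShift F r g e lam θ) t| ≤ K * angularPotential F r t := by
  have hderiv := hr.hasDerivAt_diracShift hg hgpos (e := e) (lam := lam) (θ := θ)
  obtain ⟨K₁, hK₁⟩ := exists_abs_le_mul_of_isBigO_atBot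
    (continuous_iff_continuousAt.mpr fun t => (hderiv t).continuousAt)
    (continuous_iff_continuousAt.mpr fun t => (hg t).continuousAt) hgpos
    (hr.diracShift_isBigO hg hgpos hg0 hθ) x₁
  obtain ⟨K₂, hK₂⟩ := exists_abs_le_mul_of_isBigO_atBot (hr.continuous_diracShiftDeriv hg hgpos)
    hr.continuous_potential hr.potential_pos (hr.diracShiftDeriv_isBigO hg hgpos hg0 hθ) x₁
  refine ⟨max K₁ K₂, fun t ht => ⟨(hK₁ t ht).trans ?_, (hderiv t).deriv ▸ (hK₂ t ht).trans ?_⟩⟩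
  · exact mul_le_mul_of_nonneg_right (le_max_left _ _) (hgpos t).le
  · exact mul_le_mul_of_nonneg_right (le_max_right _ _) (hr.potential_pos t).le

theorem exists_diracPerturbationBound {A : ℝ} (hgA : ∀ t, g t ≤ A) (m x₁ : ℝ) :
    ∃ K, DiracPerturbationBound (angularPotential F r) g (fun t => m * r t)
      (diracShift F r g e lam θ) A K x₁ := by
  obtain ⟨K₁, hK₁⟩ := hr.exists_abs_diracShift_le hg hgpos hg0 hθ x₁
  obtain ⟨K₂, hK₂⟩ := hr.exists_abs_mul_radius_le m x₁
  exact ⟨max K₁ K₂, {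
    pos := hr.potential_pos
    hasDerivAt := hg
    primitive_pos := hgpos
    primitive_le := hgA
    differentiable_mass := fun t => ((hr.hasDerivAt t).const_mul m).differentiableAt
    differentiable_shift := fun t => (hr.hasDerivAt_diracShift hg hgpos t).differentiableAt
    abs_mass_le := fun t ht => (hK₂ t ht).1.trans (le_max_right _ _)
    abs_deriv_mass_le := fun t ht => (hK₂ t ht).2.trans
      (mul_le_mul_of_nonneg_right (le_max_right _ _) (hr.potential_pos t).le)
    abs_shift_le := fun t ht => (hK₁ t ht).1.trans
      (mul_le_mul_of_nonneg_right (le_max_left _ _) (hgpos t).le)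
    abs_deriv_shift_le := fun t ht => (hK₁ t ht).2.trans
      (mul_le_mul_of_nonneg_right (le_max_left _ _) (hr.potential_pos t).le) }⟩

end IsHorizonFlow

end HorizonFlow

section TortoiseCoordinate

theorem quartic_eq_mul_of_roots {R : Type*} [CommRing R] [IsDomain R] {A B C D E a b c d : R}
    (hnodup : [a, b, c, d].Nodup)
    (hroot : ∀ y ∈ [a, b, c, d], A * y ^ 4 + B * y ^ 3 + C * y ^ 2 + D * y + E = 0) (r : R) :
    A * r ^ 4 + B * r ^ 3 + C * r ^ 2 + D * r + E =
      A * ((r - a) * (r - b) * (r - c) * (r - d)) := by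
  have ha := hroot a (by simp)
  have hb := hroot b (by simp)
  have hc := hroot c (by simp)
  have hd := hroot d (by simp)
  simp only [List.nodup_cons, List.mem_cons, List.not_mem_nil, or_false, not_or, and_true,
    not_false_eq_true, List.nodup_nil] at hnodup
  obtain ⟨⟨hab, hac, had⟩, ⟨hbc, hbd⟩, hcd⟩ := hnodup
  -- the first, second and third divided differences of the quartic at its roots vanish
  have hfirst : ∀ y, a ≠ y → A * y ^ 4 + B * y ^ 3 + C * y ^ 2 + D * y + E = 0 →
      A * (a ^ 3 + a ^ 2 * y + a * y ^ 2 + y ^ 3) + B * (a ^ 2 + a * y + y ^ 2) + C * (a + y) + D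
        = 0 := fun y hy h => by
    refine mul_left_cancel₀ (sub_ne_zero.mpr hy) ?_
    linear_combination ha - h
  have hsecond : ∀ y, a ≠ y → b ≠ y → A * y ^ 4 + B * y ^ 3 + C * y ^ 2 + D * y + E = 0 →
      A * (a ^ 2 + a * b + a * y + b ^ 2 + b * y + y ^ 2) + B * (a + b + y) + C = 0 :=
    fun y hay hby h => by
      refine mul_left_cancel₀ (sub_ne_zero.mpr hby) ?_
      linear_combination hfirst b hab hb - hfirst y hay h
  have hthird : A * (a + b + c + d) + B = 0 := by
    refine mul_left_cancel₀ (sub_ne_zero.mpr hcd) ?_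
    linear_combination hsecond c hac hbc hc - hsecond d had hbd hd
  linear_combination ha + (r - a) * hfirst b hab hb + (r - a) * (r - b) * hsecond c hac hbc hc
    + (r - a) * (r - b) * (r - c) * hthird

theorem hasDerivAt_of_eq_sub_mul {F H : ℝ → ℝ} {a : ℝ} (hH : ContinuousAt H a)
    (hF : F =ᶠ[nhds a] fun r => (r - a) * H r) : HasDerivAt F (H a) a := by
  rw [hasDerivAt_iff_tendsto_slope]
  refine (hH.tendsto.mono_left nhdsWithin_le_nhds).congr' ?_
  filter_upwards [hF.filter_mono nhdsWithin_le_nhds, self_mem_nhdsWithin] with r hr hne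
  rw [slope_def_field, hr, hF.eq_of_nhds, sub_self, zero_mul, sub_zero,
    mul_div_cancel_left₀ _ (sub_ne_zero.mpr hne)]

variable {F : ℝ → ℝ} {L a b c d r : ℝ}

theorem deriv_quartic_div_sq_root (ha : a ≠ 0)
    (hF : ∀ r ≠ 0, F r = L * ((r - a) * (r - b) * (r - c) * (r - d)) / r ^ 2) :
    deriv F a = L * ((a - b) * (a - c) * (a - d)) / a ^ 2 := by
  refine (hasDerivAt_of_eq_sub_mul
    (H := fun r => L * ((r - b) * (r - c) * (r - d)) / r ^ 2) ?_ ?_).deriv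
  · fun_prop (disch := positivity)
  · filter_upwards [isOpen_ne.mem_nhds ha] with r hr
    rw [hF r hr]
    ring

theorem partialFractions_sq_div_quartic (hL : L ≠ 0) (hzero : 0 ∉ [a, b, c, d])
    (hnodup : [a, b, c, d].Nodup) (hr : r ∉ [a, b, c, d]) :
    1 / (L * ((a - b) * (a - c) * (a - d)) / a ^ 2) / (r - a)
      + 1 / (L * ((b - a) * (b - c) * (b - d)) / b ^ 2) / (r - b)
      + 1 / (L * ((c - a) * (c - b) * (c - d)) / c ^ 2) / (r - c)
      + 1 / (L * ((d - a) * (d - b) * (d - c)) / d ^ 2) / (r - d)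
      = r ^ 2 / (L * ((r - a) * (r - b) * (r - c) * (r - d))) := by
  simp only [List.nodup_cons, List.mem_cons, List.not_mem_nil, or_false, not_or, and_true,
    not_false_eq_true, List.nodup_nil, ← sub_ne_zero (a := r), ← ne_eq] at hnodup hr hzero
  obtain ⟨⟨hab, hac, had⟩, ⟨hbc, hbd⟩, hcd⟩ := hnodup
  obtain ⟨hra, hrb, hrc, hrd⟩ := hr
  rw [← sub_ne_zero] at hab hac had hbc hbd hcd
  rw [← neg_sub a b, ← neg_sub a c, ← neg_sub a d, ← neg_sub b c, ← neg_sub b d, ← neg_sub c d]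
  field_simp
  ring

/-- The Regge–Wheeler coordinate of a function `F` with simple zeros `a`, `b`, `c`, `d`. -/
noncomputable def tortoise (F : ℝ → ℝ) (a b c d r : ℝ) : ℝ :=
  1 / deriv F a * Real.log (r - a) + 1 / deriv F b * Real.log (r - b)
    + 1 / deriv F c * Real.log (r - c) + 1 / deriv F d * Real.log (d - r)

theorem hasDerivAt_tortoise (hL : L ≠ 0) (hzero : 0 ∉ [a, b, c, d]) (hnodup : [a, b, c, d].Nodup)
    (hF : ∀ r ≠ 0, F r = L * ((r - a) * (r - b) * (r - c) * (r - d)) / r ^ 2)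
    (hr0 : r ≠ 0) (hr : r ∉ [a, b, c, d]) :
    HasDerivAt (tortoise F a b c d) (1 / F r) r := by
  have hlog : ∀ y, r ≠ y → HasDerivAt (fun r => Real.log (r - y)) (1 / (r - y)) r := fun y hy =>
    ((hasDerivAt_id r).sub_const y).log (sub_ne_zero.mpr hy)
  have hlog' : ∀ y, r ≠ y → HasDerivAt (fun r => Real.log (y - r)) (1 / (r - y)) r := fun y hy =>
    (((hasDerivAt_id r).const_sub y).log (sub_ne_zero.mpr hy.symm)).congr_deriv
      (by rw [id, ← neg_sub r y, neg_div_neg_eq])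
  rw [hF r hr0, one_div_div, ← partialFractions_sq_div_quartic hL hzero hnodup hr]
  simp only [List.mem_cons, List.not_mem_nil, or_false, not_or, ← ne_eq] at hzero hr
  obtain ⟨ha, hb, hc, hd⟩ := hzero
  refine (((((hlog a hr.1).const_mul _).fun_add ((hlog b hr.2.1).const_mul _)).fun_add
    ((hlog c hr.2.2.1).const_mul _)).fun_add ((hlog' d hr.2.2.2).const_mul _)).congr_deriv ?_
  rw [deriv_quartic_div_sq_root ha.symm hF,
    deriv_quartic_div_sq_root (b := a) (c := c) (d := d) hb.symm fun r hr => by rw [hF r hr]; ring,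
    deriv_quartic_div_sq_root (b := a) (c := b) (d := d) hc.symm fun r hr => by rw [hF r hr]; ring,
    deriv_quartic_div_sq_root (b := a) (c := b) (d := c) hd.symm fun r hr => by rw [hF r hr]; ring]
  ring

end TortoiseCoordinate

section InverseFlow

variable {F x r : ℝ → ℝ} {u v : ℝ}

theorem strictMonoOn_of_hasDerivAt_one_div (hF : ∀ s ∈ Set.Ioo u v, 0 < F s)
    (hx : ∀ s ∈ Set.Ioo u v, HasDerivAt x (1 / F s) s) : StrictMonoOn x (Set.Ioo u v) := by
  refine strictMonoOn_of_deriv_pos (convex_Ioo u v)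
    (fun s hs => (hx s hs).continuousAt.continuousWithinAt) fun s hs => ?_
  rw [interior_Ioo] at hs
  exact (hx s hs).deriv ▸ one_div_pos.mpr (hF s hs)

variable (hx : StrictMonoOn x (Set.Ioo u v)) (hmem : ∀ t, r t ∈ Set.Ioo u v)
  (hinv : ∀ t, x (r t) = t)
include hx hmem hinv

theorem strictMono_rightInverse : StrictMono r := fun s t hst => by
  rwa [← hx.lt_iff_lt (hmem s) (hmem t), hinv, hinv]

theorem range_rightInverse : Set.range r = Set.Ioo u v :=
  (Set.range_subset_iff.mpr hmem).antisymm fun s hs => ⟨x s, hx.injOn (hmem _) hs (hinv _)⟩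

theorem continuous_rightInverse : Continuous r := continuous_iff_continuousAt.mpr fun t =>
  continuousAt_of_monotoneOn_of_image_mem_nhds
    ((strictMono_rightInverse hx hmem hinv).monotone.monotoneOn Set.univ) univ_mem <| by
      rw [Set.image_univ, range_rightInverse hx hmem hinv]
      exact isOpen_Ioo.mem_nhds (hmem t)

theorem tendsto_atBot_rightInverse : Tendsto r atBot (nhds u) :=
  tendsto_atBot_isGLB (strictMono_rightInverse hx hmem hinv).monotone <| by
    rw [range_rightInverse hx hmem hinv]
    exact isGLB_Ioo ((hmem 0).1.trans (hmem 0).2)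

theorem hasDerivAt_rightInverse (hF : ∀ s ∈ Set.Ioo u v, 0 < F s)
    (hxF : ∀ s ∈ Set.Ioo u v, HasDerivAt x (1 / F s) s) (t : ℝ) : HasDerivAt r (F (r t)) t := by
  have h := HasDerivAt.of_local_left_inverse (continuous_rightInverse hx hmem hinv).continuousAt
    (hxF (r t) (hmem t)) (one_div_pos.mpr (hF (r t) (hmem t))).ne' (Eventually.of_forall hinv)
  rwa [one_div, inv_inv] at h

end InverseFlow

section ReissnerNordstromDeSitter

variable {M Q Λ rn rc rm rp κ : ℝ} {F r : ℝ → ℝ}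

theorem blackening_eq_mul_of_roots
    (hF : ∀ r, F r = 1 - 2 * M / r + Q ^ 2 / r ^ 2 - Λ * r ^ 2 / 3)
    (hzero : 0 ∉ [rn, rc, rm, rp]) (hnodup : [rn, rc, rm, rp].Nodup)
    (hroot : ∀ y ∈ [rn, rc, rm, rp], F y = 0) {s : ℝ} (hs : s ≠ 0) :
    F s = -Λ / 3 * ((s - rn) * (s - rc) * (s - rm) * (s - rp)) / s ^ 2 := by
  have hmul : ∀ y ≠ 0,
      -Λ / 3 * y ^ 4 + 0 * y ^ 3 + 1 * y ^ 2 + -(2 * M) * y + Q ^ 2 = F y * y ^ 2 := fun y hy => by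
    rw [hF]
    field_simp
    ring
  rw [eq_div_iff (pow_ne_zero 2 hs), ← hmul s hs]
  refine quartic_eq_mul_of_roots hnodup (fun y hy => ?_) s
  rw [hmul y (ne_of_mem_of_not_mem hy hzero), hroot y hy, zero_mul]

theorem isHorizonFlow_of_tortoise (hΛ : 0 < Λ) (hrn : rn < 0) (hrc : 0 < rc) (hrcm : rc < rm)
    (hrmp : rm < rp) (hF : ∀ r, F r = 1 - 2 * M / r + Q ^ 2 / r ^ 2 - Λ * r ^ 2 / 3)
    (hroot : ∀ y ∈ [rn, rc, rm, rp], F y = 0) (hFpos : ∀ s ∈ Set.Ioo rm rp, 0 < F s)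
    (hκ : κ = deriv F rm / 2) (hκpos : 0 < κ) (hmem : ∀ t, r t ∈ Set.Ioo rm rp)
    (hinv : ∀ t, tortoise F rn rc rm rp (r t) = t) : IsHorizonFlow F r rm κ := by
  have hrm := hrc.trans hrcm
  have hzero : 0 ∉ [rn, rc, rm, rp] := by
    simp [hrn.ne', hrc.ne, hrm.ne, (hrm.trans hrmp).ne]
  have hnodup : [rn, rc, rm, rp].Nodup := by simp; grind
  have hx : ∀ s ∈ Set.Ioo rm rp, HasDerivAt (tortoise F rn rc rm rp) (1 / F s) s := fun s hs =>
    hasDerivAt_tortoise (div_ne_zero (neg_ne_zero.mpr hΛ.ne') three_ne_zero) hzero hnodup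
      (fun _ => blackening_eq_mul_of_roots hF hzero hnodup hroot) (hrm.trans hs.1).ne'
      (by simp; grind)
  have hmono := strictMonoOn_of_hasDerivAt_one_div hFpos hx
  exact {
    contDiffOn := by
      rw [funext hF]
      have hne : ∀ y ∈ Set.Ioi (0 : ℝ), y ≠ 0 := fun y hy => (Set.mem_Ioi.mp hy).ne'
      fun_prop (disch := first | assumption | positivity | grind)
    horizon_pos := hrm
    apply_horizon := hroot rm (by simp)
    deriv_horizon := by rw [hκ]; ring
    gravity_pos := hκpos
    horizon_lt := fun t => (hmem t).1
    apply_pos := fun t => hFpos _ (hmem t)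
    hasDerivAt := hasDerivAt_rightInverse hmono hmem hinv hFpos hx
    tendsto := tendsto_atBot_rightInverse hmono hmem hinv }

end ReissnerNordstromDeSitter

section ModelSolutions

open Complex

/-- The plane wave `e^{iωt}`. -/
noncomputable def planeWave (ω t : ℝ) : ℂ := exp ((ω * t : ℝ) * I)

theorem norm_planeWave (ω t : ℝ) : ‖planeWave ω t‖ = 1 := norm_exp_ofReal_mul_I _

theorem tendsto_exp_ofReal_mul_I_sub {ι : Type*} {l : Filter ι} {f h : ι → ℝ}
    (hfh : Tendsto (fun t => f t - h t) l (nhds 0)) :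
    Tendsto (fun t => exp (f t * I) - exp (h t * I)) l (nhds 0) := by
  have hcont : Continuous fun y : ℝ => exp (y * I) - 1 := by fun_prop
  have hone : Tendsto (fun t => exp ((f t - h t : ℝ) * I) - 1) l (nhds 0) := by
    simpa [Function.comp_def] using (hcont.tendsto 0).comp hfh
  rw [tendsto_zero_iff_norm_tendsto_zero] at hone ⊢
  refine hone.congr fun t => ?_
  rw [← one_mul ‖_ - 1‖, ← norm_exp_ofReal_mul_I (h t), ← norm_mul, mul_sub, ← exp_add, mul_one,
    ← add_mul, ← ofReal_add, add_sub_cancel]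

theorem eventually_norm_le_two_of_tendsto_sub_planeWave {U : ℝ → ℂ} {α : ℂ} {ω : ℝ} (hα : ‖α‖ ≤ 1)
    (hU : Tendsto (fun t => U t - α * planeWave ω t) atBot (nhds 0)) :
    ∀ᶠ t in atBot, ‖U t‖ ≤ 2 := by
  filter_upwards [hU.norm.eventually_le_const (norm_zero.trans_lt one_pos)] with t ht
  calc ‖U t‖ = ‖(U t - α * planeWave ω t) + α * planeWave ω t‖ := by rw [sub_add_cancel]
    _ ≤ 1 + ‖α‖ * 1 := norm_add_le_of_le ht (by rw [norm_mul, norm_planeWave])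
    _ ≤ 2 := by linarith

/-- `e^{iθL} B_ν(z, ·)` with `ν = 1/2 - iθ`. For `L = log (κ / a₀)` the prefactor is the one that
makes it asymptotic to a plane wave at the horizon. -/
noncomputable def modelB (θ L : ℝ) (z : ℂ) (X : ℝ) : ℂ :=
  exp (I * θ * L) * Bfun (1 / 2 - I * θ) z X

/-- `e^{iθL} D_ν(z, ·)` with `ν = 1/2 - iθ`, the companion of `modelB`. -/
noncomputable def modelD (θ L : ℝ) (z : ℂ) (X : ℝ) : ℂ :=
  exp (I * θ * L) * Dfun (1 / 2 - I * θ) z X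

theorem modelB_neg (θ L : ℝ) (z : ℂ) (X : ℝ) :
    modelB (-θ) L z X = exp (-(I * θ) * L) * Bfun (1 / 2 + I * θ) z X := by
  simp [modelB]

theorem modelD_neg (θ L : ℝ) (z : ℂ) (X : ℝ) :
    modelD (-θ) L z X = exp (-(I * θ) * L) * Dfun (1 / 2 + I * θ) z X := by
  simp [modelD]

variable {a g : ℝ → ℝ} {κ : ℝ} (θ L : ℝ) (z : ℂ)

theorem isFreeDiracSolution_modelB_modelD (hg : ∀ t, HasDerivAt g (a t) t) (hgpos : ∀ t, 0 < g t) :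
    IsFreeDiracSolution a (fun t => θ * a t / g t) z (fun t => modelB θ L z (g t))
      fun t => modelD θ L z (g t) where
  hasDerivAt_fst t := (((hasDerivAt_Bfun (1 / 2 - I * θ) z (hgpos t)).scomp t (hg t)).const_mul
    (exp (I * θ * L))).congr_deriv (by
      simp only [modelB, modelD, real_smul, Pi.zero_apply]
      push_cast
      ring)
  hasDerivAt_snd t := (((hasDerivAt_Dfun (1 / 2 - I * θ) z (hgpos t)).scomp t (hg t)).const_mul
    (exp (I * θ * L))).congr_deriv (by
      simp only [modelB, modelD, real_smul, Pi.zero_apply]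
      push_cast
      ring)

theorem isFreeDiracSolution_modelD_modelB_neg (hg : ∀ t, HasDerivAt g (a t) t)
    (hgpos : ∀ t, 0 < g t) :
    IsFreeDiracSolution a (fun t => θ * a t / g t) z (fun t => modelD (-θ) L z (g t))
      fun t => modelB (-θ) L z (g t) := by
  convert (isFreeDiracSolution_modelB_modelD (-θ) L z hg hgpos).swap using 2
  simp [neg_div]

variable (hgpos : ∀ t, 0 < g t) (hg0 : Tendsto g atBot (nhds 0))
include hgpos hg0

theorem tendsto_modelD : Tendsto (fun t => modelD θ L z (g t)) atBot (nhds 0) := by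
  have hgw := tendsto_nhdsWithin_iff.mpr ⟨hg0, Eventually.of_forall hgpos⟩
  simpa only [modelD, Function.comp_apply, mul_zero] using
    ((tendsto_Dfun z (ν := 1 / 2 - I * θ) (by simp)).comp hgw).const_mul (exp (I * θ * L))

variable {L} (hlog : Tendsto (fun t => Real.log (g t) - κ * t) atBot (nhds (-L)))
include hlog

theorem tendsto_modelB_sub_planeWave :
    Tendsto (fun t => modelB θ L z (g t) - planeWave (κ * θ) t) atBot (nhds 0) := by
  have hgw := tendsto_nhdsWithin_iff.mpr ⟨hg0, Eventually.of_forall hgpos⟩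
  have hB := ((tendsto_Bfun_sub_exp z (ν := 1 / 2 - I * θ) (by simp)).comp hgw).const_mul
    (exp (I * θ * L))
  have hphase : Tendsto (fun t => θ * (L + Real.log (g t)) - κ * θ * t) atBot (nhds 0) := by
    have h := (hlog.add_const L).const_mul θ
    rw [neg_add_cancel, mul_zero] at h
    exact h.congr fun t => by ring
  have h := hB.add (tendsto_exp_ofReal_mul_I_sub hphase)
  rw [mul_zero, add_zero] at h
  refine h.congr fun t => ?_
  have hsplit : exp ((θ * (L + Real.log (g t)) : ℝ) * I)
      = exp (I * θ * L) * exp ((1 / 2 - (1 / 2 - I * θ)) * (Real.log (g t) : ℝ)) := by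
    rw [← exp_add]
    push_cast
    ring_nf
  simp only [Function.comp_apply, modelB, planeWave, hsplit]
  ring

end ModelSolutions

section MassiveVersusModel

open Complex

theorem exists_norm_massive_sub_model_le (θ A K : ℝ) :
    ∃ C > 0, ∀ {a g μ p : ℝ → ℝ} {x₁ κ L : ℝ}, DiracPerturbationBound a g μ p A K x₁ →
      Tendsto g atBot (nhds 0) → Tendsto (fun t => Real.log (g t) - κ * t) atBot (nhds (-L)) →
      ∀ {z : ℂ}, z ≠ 0 → ∀ {U W : ℝ → ℂ} {α β : ℂ}, ‖α‖ ≤ 1 → ‖β‖ ≤ 1 →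
      IsMassiveDiracSolution a (a * p + fun t => θ * a t / g t) μ z U W →
      Tendsto (fun t => U t - α * planeWave (κ * θ) t) atBot (nhds 0) →
      Tendsto (fun t => W t - β * planeWave (-(κ * θ)) t) atBot (nhds 0) →
      ∀ t ≤ x₁,
        ‖U t - (α * modelB θ L z (g t) + β * modelD (-θ) L z (g t))‖
          ≤ C * Real.exp (|z.re| * g t) / ‖z‖ ∧
        ‖W t - (α * modelD θ L z (g t) + β * modelB (-θ) L z (g t))‖
          ≤ C * Real.exp (|z.re| * g t) / ‖z‖ := by
  obtain ⟨C, hC⟩ := exists_norm_massive_sub_free_le θ A K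
  refine ⟨max C 1, by positivity,
    fun {a g μ p x₁ κ L} h hg0 hlog {z} hz {U W α β} hα hβ hUW hU hW t ht => ?_⟩
  have hmodel := ((isFreeDiracSolution_modelB_modelD θ L z h.hasDerivAt h.primitive_pos).const_mul
    α).add ((isFreeDiracSolution_modelD_modelB_neg θ L z h.hasDerivAt h.primitive_pos).const_mul β)
  have hB := tendsto_modelB_sub_planeWave θ z h.primitive_pos hg0 hlog
  have hBneg := tendsto_modelB_sub_planeWave (-θ) z h.primitive_pos hg0 hlog
  have hD := tendsto_modelD θ L z h.primitive_pos hg0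
  have hDneg := tendsto_modelD (-θ) L z h.primitive_pos hg0
  rw [mul_neg] at hBneg
  have hUmodel := (hU.sub (hB.const_mul α)).sub (hDneg.const_mul β)
  have hWmodel := (hW.sub (hBneg.const_mul β)).sub (hD.const_mul α)
  simp only [mul_zero, sub_zero] at hUmodel hWmodel
  have hbound := hC h hz hUW hmodel (eventually_norm_le_two_of_tendsto_sub_planeWave hα hU)
    (eventually_norm_le_two_of_tendsto_sub_planeWave hβ hW)
    (hUmodel.congr fun t => by ring) (hWmodel.congr fun t => by ring) t ht
  have hmax : C * Real.exp (|z.re| * g t) / ‖z‖ ≤ max C 1 * Real.exp (|z.re| * g t) / ‖z‖ := by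
    gcongr
    exact le_max_left _ _
  exact ⟨hbound.1.trans hmax, hbound.2.trans hmax⟩

end MassiveVersusModel

section JostFunction

open Complex

/-- The combination of the first two rows of a solution of the `4 × 4` Dirac system which, for
`σ = ±1`, is the first component of a decoupled `2 × 2` system. -/
noncomputable def chiralFst (σ : ℝ) (N : Matrix (Fin 4) (Fin 4) ℂ) (j : Fin 4) : ℂ :=
  N 0 j + σ * N 1 j

/-- The combination of the last two rows which is the partner of `chiralFst`. -/
noncomputable def chiralSnd (σ : ℝ) (N : Matrix (Fin 4) (Fin 4) ℂ) (j : Fin 4) : ℂ :=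
  I * (N 3 j - σ * N 2 j)

theorem chiralFst_sub (σ : ℝ) (M N : Matrix (Fin 4) (Fin 4) ℂ) (j : Fin 4) :
    chiralFst σ (M - N) j = chiralFst σ M j - chiralFst σ N j := by
  simp only [chiralFst, Matrix.sub_apply]
  ring

theorem chiralSnd_sub (σ : ℝ) (M N : Matrix (Fin 4) (Fin 4) ℂ) (j : Fin 4) :
    chiralSnd σ (M - N) j = chiralSnd σ M j - chiralSnd σ N j := by
  simp only [chiralSnd, Matrix.sub_apply]
  ring

theorem norm_chiralFst_one_le {σ : ℝ} (hσ : |σ| = 1) (j : Fin 4) : ‖chiralFst σ 1 j‖ ≤ 1 := by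
  fin_cases j <;> simp [chiralFst, Matrix.one_apply, hσ]

theorem norm_chiralSnd_one_le {σ : ℝ} (hσ : |σ| = 1) (j : Fin 4) : ‖chiralSnd σ 1 j‖ ≤ 1 := by
  fin_cases j <;> simp [chiralSnd, Matrix.one_apply, hσ]

theorem norm_le_of_norm_add_le_of_norm_sub_le {E : Type*} [SeminormedAddCommGroup E]
    [NormedSpace ℝ E] {u v : E} {T : ℝ} (hadd : ‖u + v‖ ≤ T) (hsub : ‖u - v‖ ≤ T) : ‖u‖ ≤ T := by
  have h := norm_add_le_of_le hadd hsub
  rw [add_add_sub_cancel, ← two_smul ℝ u, norm_smul, Real.norm_two] at h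
  linarith

theorem norm_le_of_norm_chiral_le {N : Matrix (Fin 4) (Fin 4) ℂ} {j : Fin 4} {T : ℝ}
    (hfst : ∀ σ : ℝ, |σ| = 1 → ‖chiralFst σ N j‖ ≤ T)
    (hsnd : ∀ σ : ℝ, |σ| = 1 → ‖chiralSnd σ N j‖ ≤ T) (i : Fin 4) : ‖N i j‖ ≤ T := by
  have hone := hfst 1 (by simp)
  have hneg := hfst (-1) (by simp)
  have hone' := hsnd 1 (by simp)
  have hneg' := hsnd (-1) (by simp)
  simp only [chiralFst, chiralSnd, norm_mul, norm_I, ofReal_one, ofReal_neg, one_mul, neg_mul,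
    sub_neg_eq_add, ← sub_eq_add_neg] at hone hneg hone' hneg'
  fin_cases i
  · exact norm_le_of_norm_add_le_of_norm_sub_le hone hneg
  · exact norm_le_of_norm_add_le_of_norm_sub_le (add_comm (N 0 j) _ ▸ hone)
      (norm_sub_rev (N 0 j) _ ▸ hneg)
  · exact norm_le_of_norm_add_le_of_norm_sub_le (add_comm (N 3 j) _ ▸ hneg')
      (norm_sub_rev (N 3 j) _ ▸ hone')
  · exact norm_le_of_norm_add_le_of_norm_sub_le hneg' hone'

theorem Gamma0_mul_apply (N : Matrix (Fin 4) (Fin 4) ℂ) (j : Fin 4) :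
    (Gamma0 * N) 0 j = -I * N 2 j ∧ (Gamma0 * N) 1 j = I * N 3 j ∧
      (Gamma0 * N) 2 j = I * N 0 j ∧ (Gamma0 * N) 3 j = -I * N 1 j := by
  simp only [Matrix.mul_apply, Fin.sum_univ_four]
  simp [Gamma0]

theorem Gamma1_mul_apply (N : Matrix (Fin 4) (Fin 4) ℂ) (j : Fin 4) :
    (Gamma1 * N) 0 j = N 0 j ∧ (Gamma1 * N) 1 j = N 1 j ∧
      (Gamma1 * N) 2 j = -N 2 j ∧ (Gamma1 * N) 3 j = -N 3 j := by
  simp only [Matrix.mul_apply, Fin.sum_univ_four]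
  simp [Gamma1]

theorem Gamma2_mul_apply (N : Matrix (Fin 4) (Fin 4) ℂ) (j : Fin 4) :
    (Gamma2 * N) 0 j = N 3 j ∧ (Gamma2 * N) 1 j = -N 2 j ∧
      (Gamma2 * N) 2 j = -N 1 j ∧ (Gamma2 * N) 3 j = N 0 j := by
  simp only [Matrix.mul_apply, Fin.sum_univ_four]
  simp [Gamma2]

/-- The diagonal of `Γ¹`. -/
def diagGamma1 : Fin 4 → ℝ := ![1, 1, -1, -1]

theorem expG1_mul_mul_expG1_apply (w v : ℂ) (N : Matrix (Fin 4) (Fin 4) ℂ) (i j : Fin 4) :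
    (expG1 w * N * expG1 v) i j
      = exp (diagGamma1 i * w + diagGamma1 j * v) * N i j := by
  have hdiag (w : ℂ) (i : Fin 4) :
      ![exp w, exp w, exp (-w), exp (-w)] i = exp (diagGamma1 i * w) := by
    fin_cases i <;> simp [diagGamma1]
  rw [expG1, expG1, Matrix.mul_diagonal, Matrix.diagonal_mul, hdiag, hdiag, mul_right_comm,
    ← exp_add]

theorem tendsto_sub_const_mul_exp_of_tendsto_exp_mul {ι : Type*} {l : Filter ι} {f : ι → ℂ}
    {e h : ι → ℝ} {y : ℂ} (hf : Tendsto (fun t => exp (e t * I) * f t) l (nhds y))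
    (heh : Tendsto (fun t => e t + h t) l (nhds 0)) :
    Tendsto (fun t => f t - y * exp (h t * I)) l (nhds 0) := by
  have hmul := (hf.sub (tendsto_exp_ofReal_mul_I_sub (f := fun t => e t + h t) (h := 0)
    (by simpa using heh) |>.const_mul y)).sub_const y
  rw [mul_zero, sub_zero, sub_self, tendsto_zero_iff_norm_tendsto_zero] at hmul
  rw [tendsto_zero_iff_norm_tendsto_zero]
  refine hmul.congr fun t => ?_
  rw [← one_mul ‖f t - _‖, ← norm_exp_ofReal_mul_I (e t), ← norm_mul]
  congr 1
  simp only [Pi.zero_apply, ofReal_zero, zero_mul, exp_zero, ofReal_add, add_mul, exp_add]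
  ring

namespace IsJostRight

variable {a b c Cm ℓ μ : ℝ → ℝ} {lam : ℝ} {z : ℂ} {F : ℝ → Matrix (Fin 4) (Fin 4) ℂ}

theorem hasDerivAt (h : IsJostRight a b c Cm lam z F) (i j : Fin 4) (t : ℝ) :
    HasDerivAt (fun s => F s i j) (matDeriv F t i j) t :=
  ((h.1 i j).differentiable one_ne_zero t).hasDerivAt

theorem matDeriv_apply (h : IsJostRight a b c Cm lam z F) (t : ℝ) (j : Fin 4) :
    matDeriv F t 0 j = I * (lam - c t) * F t 0 j + I * z * a t * F t 3 j - b t * F t 2 j ∧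
    matDeriv F t 1 j = I * (lam - c t) * F t 1 j - I * z * a t * F t 2 j + b t * F t 3 j ∧
    matDeriv F t 2 j = -(I * (lam - c t)) * F t 2 j + I * z * a t * F t 1 j - b t * F t 0 j ∧
    matDeriv F t 3 j = -(I * (lam - c t)) * F t 3 j - I * z * a t * F t 0 j + b t * F t 1 j := by
  have hrow := fun i => congrFun (congrFun (h.2.1 t) i) j
  have h0 := hrow 0
  have h1 := hrow 1
  have h2 := hrow 2
  have h3 := hrow 3
  simp only [Matrix.add_apply, Matrix.sub_apply, Matrix.smul_apply, smul_eq_mul, Gamma0_mul_apply,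
    Gamma1_mul_apply, Gamma2_mul_apply] at h0 h1 h2 h3
  refine ⟨?_, ?_, ?_, ?_⟩
  · linear_combination I * h0 + (matDeriv F t 0 j + b t * F t 2 j) * I_mul_I
  · linear_combination I * h1 + (matDeriv F t 1 j - b t * F t 3 j) * I_mul_I
  · linear_combination -I * h2 + (matDeriv F t 2 j + b t * F t 0 j) * I_mul_I
  · linear_combination -I * h3 + (matDeriv F t 3 j - b t * F t 1 j) * I_mul_I

theorem isMassiveDiracSolution_chiral (h : IsJostRight a b c Cm lam z F) {σ : ℝ} (hσ : |σ| = 1)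
    (hb : ∀ t, b t = a t * μ t) (hℓ : ∀ t, lam - c t = ℓ t) (j : Fin 4) :
    IsMassiveDiracSolution a ℓ (fun t => σ * μ t) z (fun t => chiralFst σ (F t) j)
      fun t => chiralSnd σ (F t) j := by
  have hσσ : (σ : ℂ) * σ = 1 := by exact_mod_cast (abs_mul_abs_self σ).symm.trans (by simp [hσ])
  constructor <;> intro t <;> obtain ⟨h0, h1, h2, h3⟩ := h.matDeriv_apply t j
  · refine ((h.hasDerivAt 0 j t).add ((h.hasDerivAt 1 j t).const_mul (σ : ℂ))).congr_deriv ?_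
    rw [h0, h1, ← hℓ, hb]
    simp only [chiralFst, chiralSnd]
    push_cast
    linear_combination (-(I * I * (a t * μ t * F t 2 j))) * hσσ
      + (a t * μ t * (σ * F t 3 j - F t 2 j)) * I_mul_I
  · refine (((h.hasDerivAt 3 j t).sub ((h.hasDerivAt 2 j t).const_mul (σ : ℂ))).const_mul
      I).congr_deriv ?_
    rw [h2, h3, ← hℓ, hb]
    simp only [chiralFst, chiralSnd]
    push_cast
    linear_combination (-(I * (a t * μ t * F t 1 j))) * hσσ
      - z * a t * (F t 0 j + σ * F t 1 j) * I_mul_I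

theorem tendsto_sub_planeWave (h : IsJostRight a b c Cm lam z F) {c₀ : ℝ}
    (hCm : Tendsto (fun t => Cm t - c₀ * t) atBot (nhds 0)) (i j : Fin 4) :
    Tendsto (fun t => F t i j - (1 : Matrix (Fin 4) (Fin 4) ℂ) i j
      * planeWave (diagGamma1 i * (lam - c₀)) t) atBot (nhds 0) := by
  have hlim : Tendsto (fun t => exp ((diagGamma1 i * Cm t - diagGamma1 j * (lam * t) : ℝ) * I)
      * F t i j) atBot (nhds ((1 : Matrix (Fin 4) (Fin 4) ℂ) i j)) := by
    refine (h.2.2 i j).congr fun t => ?_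
    rw [expG1_mul_mul_expG1_apply]
    push_cast
    ring_nf
  obtain rfl | hij := eq_or_ne i j
  · refine tendsto_sub_const_mul_exp_of_tendsto_exp_mul hlim ?_
    have hphase := hCm.const_mul (diagGamma1 i)
    rw [mul_zero] at hphase
    exact hphase.congr fun t => by ring
  · rw [Matrix.one_apply_ne hij] at hlim ⊢
    have h := tendsto_sub_const_mul_exp_of_tendsto_exp_mul hlim
      (h := fun t => -(diagGamma1 i * Cm t - diagGamma1 j * (lam * t))) (by simp)
    simpa only [zero_mul] using h

theorem tendsto_chiralFst_sub (h : IsJostRight a b c Cm lam z F) {c₀ : ℝ}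
    (hCm : Tendsto (fun t => Cm t - c₀ * t) atBot (nhds 0)) (σ : ℝ) (j : Fin 4) :
    Tendsto (fun t => chiralFst σ (F t) j - chiralFst σ 1 j * planeWave (lam - c₀) t) atBot
      (nhds 0) := by
  have h := (h.tendsto_sub_planeWave hCm 0 j).add
    ((h.tendsto_sub_planeWave hCm 1 j).const_mul (σ : ℂ))
  rw [mul_zero, add_zero] at h
  refine h.congr fun t => ?_
  simp [chiralFst, diagGamma1]
  ring

theorem tendsto_chiralSnd_sub (h : IsJostRight a b c Cm lam z F) {c₀ : ℝ}
    (hCm : Tendsto (fun t => Cm t - c₀ * t) atBot (nhds 0)) (σ : ℝ) (j : Fin 4) :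
    Tendsto (fun t => chiralSnd σ (F t) j - chiralSnd σ 1 j * planeWave (-(lam - c₀)) t) atBot
      (nhds 0) := by
  have h := ((h.tendsto_sub_planeWave hCm 3 j).sub
    ((h.tendsto_sub_planeWave hCm 2 j).const_mul (σ : ℂ))).const_mul I
  rw [mul_zero, sub_zero, mul_zero] at h
  refine h.congr fun t => ?_
  simp [chiralSnd, diagGamma1]
  ring

end IsJostRight

/-- The matrix of model solutions approximating the Jost function from the right at the point with
`g = X`, where `L = log (κ / a₀)`. -/
noncomputable def jostModel (θ L : ℝ) (z : ℂ) (X : ℝ) : Matrix (Fin 4) (Fin 4) ℂ :=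
  !![modelB θ L z X, 0, 0, I * modelD (-θ) L z X;
    0, modelB θ L z X, -(I * modelD (-θ) L z X), 0;
    0, I * modelD θ L z X, modelB (-θ) L z X, 0;
    -(I * modelD θ L z X), 0, 0, modelB (-θ) L z X]

theorem chiralFst_jostModel (σ θ L : ℝ) (z : ℂ) (X : ℝ) (j : Fin 4) :
    chiralFst σ (jostModel θ L z X) j
      = chiralFst σ 1 j * modelB θ L z X + chiralSnd σ 1 j * modelD (-θ) L z X := by
  fin_cases j <;> simp [chiralFst, chiralSnd, jostModel, Matrix.one_apply]
  ring

theorem chiralSnd_jostModel (σ θ L : ℝ) (z : ℂ) (X : ℝ) (j : Fin 4) :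
    chiralSnd σ (jostModel θ L z X) j
      = chiralFst σ 1 j * modelD θ L z X + chiralSnd σ 1 j * modelB (-θ) L z X := by
  fin_cases j <;> simp [chiralFst, chiralSnd, jostModel, Matrix.one_apply]
  · linear_combination (-(modelD θ L z X)) * I_mul_I
  · linear_combination (-(σ * modelD θ L z X)) * I_mul_I
  · ring

theorem blk_jostModel_zero_zero (θ L : ℝ) (z : ℂ) (X : ℝ) :
    blk (jostModel θ L z X) 0 0
      = (exp (I * θ * L) * Bfun (1 / 2 - I * θ) z X) • (1 : Matrix (Fin 2) (Fin 2) ℂ) := by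
  ext i j
  fin_cases i <;> fin_cases j <;> simp [blk, jostModel, modelB]

theorem blk_jostModel_zero_one (θ L : ℝ) (z : ℂ) (X : ℝ) :
    blk (jostModel θ L z X) 0 1
      = (I * exp (-(I * θ) * L) * Dfun (1 / 2 + I * θ) z X) • Jmat := by
  ext i j
  fin_cases i <;> fin_cases j <;> simp [blk, jostModel, modelD_neg, Jmat, mul_assoc]

theorem blk_jostModel_one_zero (θ L : ℝ) (z : ℂ) (X : ℝ) :
    blk (jostModel θ L z X) 1 0
      = (I * exp (I * θ * L) * Dfun (1 / 2 - I * θ) z X) • Jmat := by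
  ext i j
  fin_cases i <;> fin_cases j <;> simp [blk, jostModel, modelD, Jmat, mul_assoc]

theorem blk_jostModel_one_one (θ L : ℝ) (z : ℂ) (X : ℝ) :
    blk (jostModel θ L z X) 1 1
      = (exp (-(I * θ) * L) * Bfun (1 / 2 + I * θ) z X) • (1 : Matrix (Fin 2) (Fin 2) ℂ) := by
  ext i j
  fin_cases i <;> fin_cases j <;> simp [blk, jostModel, modelB_neg]

theorem mnorm2_blk_sub_blk_le {M N : Matrix (Fin 4) (Fin 4) ℂ} {T : ℝ}
    (h : ∀ i j, ‖(M - N) i j‖ ≤ T) (p q : Fin 2) : mnorm2 (blk M p q - blk N p q) ≤ T :=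
  max_le (max_le (h _ _) (h _ _)) (max_le (h _ _) (h _ _))

end JostFunction

section JostAsymptotics

variable {F r g Cm : ℝ → ℝ} {r₀ κ a₀ e lam θ : ℝ}

theorem isEquivalent_mul_exp_of_isBigO {f : ℝ → ℝ} (hκ : 0 < κ) (ha₀ : a₀ ≠ 0)
    (hf : (fun s => f s - a₀ * Real.exp (κ * s)) =O[atBot] fun s => Real.exp (3 * κ * s)) :
    f ~[atBot] fun s => a₀ * Real.exp (κ * s) := by
  refine hf.trans_isLittleO (IsLittleO.const_mul_right ha₀ ?_)
  refine Real.isLittleO_exp_comp_exp_comp.mpr ?_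
  refine (tendsto_id.const_mul_atBot_of_neg (r := -(2 * κ)) (by linarith)).congr fun s => ?_
  simp only [id_eq]
  ring

theorem IsHorizonFlow.mul_sqrt_eq (hr : IsHorizonFlow F r r₀ κ) (m t : ℝ) :
    m * √(F (r t)) = angularPotential F r t * (m * r t) := by
  rw [angularPotential, mul_left_comm, div_mul_cancel₀ _ (hr.pos t).ne']

theorem IsHorizonFlow.energy_eq (hr : IsHorizonFlow F r r₀ κ) (g : ℝ → ℝ) (e lam θ t : ℝ) :
    lam - e / r t = (angularPotential F r * diracShift F r g e lam θ
      + fun t => θ * angularPotential F r t / g t) t := by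
  simp only [Pi.add_apply, Pi.mul_apply, diracShift, mul_sub,
    mul_div_cancel₀ _ (hr.potential_pos t).ne']
  ring

theorem IsHorizonFlow.exists_norm_jost_sub_jostModel_le (hr : IsHorizonFlow F r r₀ κ)
    (hg : ∀ t, HasDerivAt g (angularPotential F r t) t) (hgpos : ∀ t, 0 < g t)
    (hg0 : Tendsto g atBot (nhds 0)) {A : ℝ} (hgA : ∀ t, g t ≤ A)
    (ha₀ : 0 < a₀) (ha : angularPotential F r ~[atBot] fun t => a₀ * Real.exp (κ * t))
    (hθ : lam - e / r₀ = κ * θ) (hCm : Tendsto (fun t => Cm t - e / r₀ * t) atBot (nhds 0))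
    (m x₁ : ℝ) :
    ∃ C > 0, ∀ {z : ℂ}, z ≠ 0 → ∀ {J : ℝ → Matrix (Fin 4) (Fin 4) ℂ},
      IsJostRight (angularPotential F r) (fun t => m * √(F (r t))) (fun t => e / r t) Cm lam z J →
      ∀ t ≤ x₁, ∀ i j, ‖(J t - jostModel θ (Real.log (κ / a₀)) z (g t)) i j‖
        ≤ C * Real.exp (|z.re| * g t) / ‖z‖ := by
  obtain ⟨K, hK⟩ := hr.exists_diracPerturbationBound hg hgpos hg0 hθ hgA m x₁
  obtain ⟨C, hC, hbound⟩ := exists_norm_massive_sub_model_le θ A K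
  have hlog := hr.tendsto_log_primitive_sub hg hg0 hgpos ha₀ ha
  rw [← inv_div, Real.log_inv] at hlog
  refine ⟨C, hC, fun {z} hz {J} hJ t ht i j => ?_⟩
  have hchiral : ∀ σ : ℝ, |σ| = 1 → _ := fun σ hσ => by
    have hσK : DiracPerturbationBound (angularPotential F r) g (fun t => σ * (m * r t))
        (diracShift F r g e lam θ) A K x₁ := by
      obtain rfl | rfl := eq_or_eq_neg_of_abs_eq hσ
      · simpa only [one_mul] using hK
      · simp only [neg_one_mul]
        exact hK.neg_mass
    exact hbound hσK hg0 hlog hz (norm_chiralFst_one_le hσ j) (norm_chiralSnd_one_le hσ j)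
      (hJ.isMassiveDiracSolution_chiral hσ (hr.mul_sqrt_eq m)
        (hr.energy_eq g e lam θ) j)
      (hθ ▸ hJ.tendsto_chiralFst_sub hCm σ j) (hθ ▸ hJ.tendsto_chiralSnd_sub hCm σ j) t ht
  refine norm_le_of_norm_chiral_le (fun σ hσ => ?_) (fun σ hσ => ?_) i
  · rw [chiralFst_sub, chiralFst_jostModel]
    exact (hchiral σ hσ).1
  · rw [chiralSnd_sub, chiralSnd_jostModel]
    exact (hchiral σ hσ).2

theorem stmt_15_general (hr : IsHorizonFlow F r r₀ κ) (hint : Integrable (angularPotential F r))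
    (ha₀ : 0 < a₀) (ha : angularPotential F r ~[atBot] fun t => a₀ * Real.exp (κ * t))
    (hg : ∀ t, g t = ∫ s in Set.Iic t, angularPotential F r s)
    (hCm : ∀ t, Cm t = (∫ s in Set.Iic t, (e / r s - e / r₀)) + e / r₀ * t)
    (hθ : θ = (lam - e / r₀) / κ) (m : ℝ) {X₁ : ℝ} {h : ℝ → ℝ}
    (hgh : ∀ X ∈ Set.Ioc 0 X₁, g (h X) = X) :
    ∃ C > 0, ∀ {z : ℂ}, z ≠ 0 → ∀ {J : ℝ → Matrix (Fin 4) (Fin 4) ℂ},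
      IsJostRight (angularPotential F r) (fun t => m * √(F (r t))) (fun t => e / r t) Cm lam z J →
      ∀ X ∈ Set.Ioc 0 X₁,
        mnorm2 (blk (J (h X)) 0 0
            - (Complex.exp (Complex.I * θ * Real.log (κ / a₀))
              * Bfun (1 / 2 - Complex.I * θ) z X) • (1 : Matrix (Fin 2) (Fin 2) ℂ))
          ≤ C * Real.exp (|z.re| * X) / ‖z‖ ∧
        mnorm2 (blk (J (h X)) 0 1
            - (Complex.I * Complex.exp (-(Complex.I * θ) * Real.log (κ / a₀))
              * Dfun (1 / 2 + Complex.I * θ) z X) • Jmat)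
          ≤ C * Real.exp (|z.re| * X) / ‖z‖ ∧
        mnorm2 (blk (J (h X)) 1 0
            - (Complex.I * Complex.exp (Complex.I * θ * Real.log (κ / a₀))
              * Dfun (1 / 2 - Complex.I * θ) z X) • Jmat)
          ≤ C * Real.exp (|z.re| * X) / ‖z‖ ∧
        mnorm2 (blk (J (h X)) 1 1
            - (Complex.exp (-(Complex.I * θ) * Real.log (κ / a₀))
              * Bfun (1 / 2 + Complex.I * θ) z X) • (1 : Matrix (Fin 2) (Fin 2) ℂ))
          ≤ C * Real.exp (|z.re| * X) / ‖z‖ := by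
  obtain rfl : g = _ := funext hg
  have hcont := hr.continuous_potential
  have hphase : Tendsto (fun t => Cm t - e / r₀ * t) atBot (nhds 0) := by
    simp only [hCm, add_sub_cancel_right]
    exact tendsto_integral_Iic_zero tendsto_id
  have hθ' : lam - e / r₀ = κ * θ := by rw [hθ, mul_div_cancel₀ _ hr.gravity_pos.ne']
  obtain ⟨C, hC, hbound⟩ := hr.exists_norm_jost_sub_jostModel_le
    (hasDerivAt_integral_Iic hcont hint) (integral_Iic_pos hcont hint hr.potential_pos)
    (tendsto_integral_Iic_zero tendsto_id)
    (fun t => setIntegral_le_integral hint (ae_of_all _ fun s => (hr.potential_pos s).le)) ha₀ ha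
    hθ' hphase m (h X₁)
  refine ⟨C, hC, fun {z} hz {J} hJ X hX => ?_⟩
  have hle : h X ≤ h X₁ := by
    rw [← (strictMono_integral_Iic hcont hint hr.potential_pos).le_iff_le]
    simpa only [hgh X hX, hgh X₁ ⟨hX.1.trans_le hX.2, le_rfl⟩] using hX.2
  have hblk := mnorm2_blk_sub_blk_le (hbound hz hJ (h X) hle)
  simp only [hgh X hX] at hblk
  rw [← blk_jostModel_zero_zero, ← blk_jostModel_zero_one, ← blk_jostModel_one_zero,
    ← blk_jostModel_one_one]
  exact ⟨hblk 0 0, hblk 0 1, hblk 1 0, hblk 1 1⟩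

end JostAsymptotics

/-- Asymptotics of the blocks of the Jost function from the right for
large `|z|`, uniformly on compact subsets of `(0,A)`:
`F_{R1} ≈ (κ₋/a₋)^{iθ}B_{ν₋}(z,X)I₂`, `F_{R2} ≈ i(κ₋/a₋)^{−iθ}D_{μ₋}(z,X)J`,
`F_{R3} ≈ i(κ₋/a₋)^{iθ}D_{ν₋}(z,X)J`, `F_{R4} ≈ (κ₋/a₋)^{−iθ}B_{μ₋}(z,X)I₂`,
with error `O(e^{|Re z|X}/|z|)`. -/
theorem stmt_15 (M Q Λ : ℝ) (hM : 0 < M) (hΛ : 0 < Λ)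
    (rn rc rm rp : ℝ) (hrn : rn < 0) (hrc : 0 < rc) (hrcm : rc < rm) (hrmp : rm < rp)
    (F : ℝ → ℝ)
    (hF : ∀ r, F r = 1 - 2 * M / r + Q ^ 2 / r ^ 2 - Λ * r ^ 2 / 3)
    (hFn : F rn = 0) (hFc : F rc = 0) (hFm : F rm = 0) (hFp : F rp = 0)
    (hFpos : ∀ r ∈ Set.Ioo rm rp, 0 < F r)
    (κn κc κm κp : ℝ)
    (hκn : κn = deriv F rn / 2) (hκc : κc = deriv F rc / 2)
    (hκm : κm = deriv F rm / 2) (hκp : κp = deriv F rp / 2)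
    (hκmpos : 0 < κm) (hκpneg : κp < 0)
    (x : ℝ → ℝ)
    (hx : ∀ r, x r = 1 / (2 * κn) * Real.log (r - rn) + 1 / (2 * κc) * Real.log (r - rc)
      + 1 / (2 * κm) * Real.log (r - rm) + 1 / (2 * κp) * Real.log (rp - r))
    (rfun : ℝ → ℝ)
    (hrmem : ∀ s, rfun s ∈ Set.Ioo rm rp) (hrinv : ∀ s, x (rfun s) = s)
    (m q : ℝ) (a b c : ℝ → ℝ)
    (ha : ∀ s, a s = Real.sqrt (F (rfun s)) / rfun s)
    (hb : ∀ s, b s = m * Real.sqrt (F (rfun s)))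
    (hc : ∀ s, c s = q * Q / rfun s)
    (cm cp : ℝ) (hcm : cm = q * Q / rm) (hcp : cp = q * Q / rp)
    (am : ℝ) (ham : 0 < am)
    (haas : (fun s => a s - am * Real.exp (κm * s)) =O[atBot] fun s => Real.exp (3 * κm * s))
    (haint : Integrable a)
    (A : ℝ) (hA : A = ∫ s, a s) (hApos : 0 < A)
    (g : ℝ → ℝ) (hg : ∀ t, g t = ∫ s in Set.Iic t, a s)
    (hfun : ℝ → ℝ) (hgh : ∀ t, hfun (g t) = t)
    (hhg : ∀ X ∈ Set.Ioo (0 : ℝ) A, g (hfun X) = X)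
    (lam : ℝ)
    (Cminus : ℝ → ℝ)
    (hCminus : ∀ t, Cminus t = (∫ s in Set.Iic t, (c s - cm)) + cm * t)
    (θ : ℝ) (hθ : θ = (lam - cm) / κm)
    (νm μm : ℂ)
    (hνm : νm = 1 / 2 - Complex.I * (θ : ℂ)) (hμm : μm = 1 / 2 + Complex.I * (θ : ℂ))
    (FR : ℂ → ℝ → Matrix (Fin 4) (Fin 4) ℂ)
    (hJost : ∀ z : ℂ, IsJostRight a b c Cminus lam z (FR z)) :
    ∀ X₀ X₁ : ℝ, 0 < X₀ → X₀ ≤ X₁ → X₁ < A →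
      ∃ C > (0 : ℝ), ∃ R > (0 : ℝ), ∀ z : ℂ, R ≤ ‖z‖ →
        ∀ X ∈ Set.Icc X₀ X₁,
          mnorm2 (blk (FR z (hfun X)) 0 0
              - (Complex.exp (Complex.I * (θ : ℂ) * ((Real.log (κm / am) : ℝ) : ℂ))
                  * Bfun νm z X) • (1 : Matrix (Fin 2) (Fin 2) ℂ))
            ≤ C * Real.exp (|z.re| * X) / ‖z‖ ∧
          mnorm2 (blk (FR z (hfun X)) 0 1
              - (Complex.I * Complex.exp (-(Complex.I * (θ : ℂ)) * ((Real.log (κm / am) : ℝ) : ℂ))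
                  * Dfun μm z X) • Jmat)
            ≤ C * Real.exp (|z.re| * X) / ‖z‖ ∧
          mnorm2 (blk (FR z (hfun X)) 1 0
              - (Complex.I * Complex.exp (Complex.I * (θ : ℂ) * ((Real.log (κm / am) : ℝ) : ℂ))
                  * Dfun νm z X) • Jmat)
            ≤ C * Real.exp (|z.re| * X) / ‖z‖ ∧
          mnorm2 (blk (FR z (hfun X)) 1 1
              - (Complex.exp (-(Complex.I * (θ : ℂ)) * ((Real.log (κm / am) : ℝ) : ℂ))
                  * Bfun μm z X) • (1 : Matrix (Fin 2) (Fin 2) ℂ))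
            ≤ C * Real.exp (|z.re| * X) / ‖z‖ := by
  intro X₀ X₁ hX₀ _ hX₁
  subst hcm hνm hμm
  obtain rfl : a = angularPotential F rfun := funext ha
  obtain rfl : b = fun t => m * √(F (rfun t)) := funext hb
  obtain rfl : c = fun t => q * Q / rfun t := funext hc
  have hr : IsHorizonFlow F rfun rm κm :=
    isHorizonFlow_of_tortoise hΛ hrn hrc hrcm hrmp hF (by simp [hFn, hFc, hFm, hFp]) hFpos hκm
      hκmpos hrmem fun t => by
        simpa only [tortoise, hκn, hκc, hκm, hκp, mul_div_cancel₀ _ (two_ne_zero' ℝ)] using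
          (hx _).symm.trans (hrinv t)
  obtain ⟨C, hC, hbound⟩ := stmt_15_general hr haint ham
    (isEquivalent_mul_exp_of_isBigO hκmpos ham.ne' haas) hg hCminus hθ m
    fun X hX => hhg X ⟨hX.1, hX.2.trans_lt hX₁⟩
  exact ⟨C, hC, 1, one_pos, fun z hz X hX => hbound (norm_pos_iff.mp (one_pos.trans_le hz))
    (hJost z) X ⟨hX₀.trans_le hX.1, hX.2⟩⟩
end
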